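/- (Completeness of the multi-succedent calculus.) If pred-IGL ⊨ A, i.e. K, w ⊨^ρ ⟨A⟩ₓ for every Kripke structure K in pred-IGL, every world w and w-environment ρ, then mℓIGL ⊢ x:A, i.e. there is an ∞-proof in mℓIK4 of the sequent ∅ ⇒ x:A. -/

import Mathlib

namespace IGL

/-- Modal formulas over propositional symbols indexed by naturals. -/
inductive Formula : Type
  | atom : ℕ → Formula
  | bot  : Formula
  | and  : Formula → Formula → Formula
  | or   : Formula → Formula → Formula
  | imp  : Formula → Formula → Formula
  | box  : Formula → Formula
  | dia  : Formula → Formula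

/-- ¬A abbreviates A → ⊥. -/
def Formula.neg (A : Formula) : Formula := Formula.imp A Formula.bot

/-- Löb's axiom □(□A→A)→□A. -/
def lobAx (A : Formula) : Formula :=
  Formula.imp (Formula.box (Formula.imp (Formula.box A) A)) (Formula.box A)

/-- Boolean evaluation of a formula, treating modal (sub)formulas and atoms as
propositional atoms; used to define substitution instances of classical
propositional tautologies. -/
def evalCPL (v : Formula → Bool) : Formula → Bool
  | Formula.atom n  => v (Formula.atom n)
  | Formula.bot     => false
  | Formula.and A B => evalCPL v A && evalCPL v B
  | Formula.or  A B => evalCPL v A || evalCPL v B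
  | Formula.imp A B => !evalCPL v A || evalCPL v B
  | Formula.box A   => v (Formula.box A)
  | Formula.dia A   => v (Formula.dia A)

/-- A (substitution instance of a) theorem of classical propositional logic. -/
def Taut (A : Formula) : Prop := ∀ v, evalCPL v A = true

/-- The modal logic K: classical propositional logic, axiom k, modus ponens, necessitation. -/
inductive KProof : Formula → Prop
  | taut {A : Formula} : Taut A → KProof A
  | axK (A B : Formula) :
      KProof (Formula.imp (Formula.box (Formula.imp A B))
        (Formula.imp (Formula.box A) (Formula.box B)))
  | mp {A B : Formula} : KProof (Formula.imp A B) → KProof A → KProof B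
  | nec {A : Formula} : KProof A → KProof (Formula.box A)

/-- The modal logic K4: K plus axiom 4. -/
inductive K4Proof : Formula → Prop
  | taut {A : Formula} : Taut A → K4Proof A
  | axK (A B : Formula) :
      K4Proof (Formula.imp (Formula.box (Formula.imp A B))
        (Formula.imp (Formula.box A) (Formula.box B)))
  | ax4 (A : Formula) :
      K4Proof (Formula.imp (Formula.box A) (Formula.box (Formula.box A)))
  | mp {A B : Formula} : K4Proof (Formula.imp A B) → K4Proof A → K4Proof B
  | nec {A : Formula} : K4Proof A → K4Proof (Formula.box A)

/-- Gödel–Löb logic GL: K4 plus Löb's axiom. -/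
inductive GLProof : Formula → Prop
  | taut {A : Formula} : Taut A → GLProof A
  | axK (A B : Formula) :
      GLProof (Formula.imp (Formula.box (Formula.imp A B))
        (Formula.imp (Formula.box A) (Formula.box B)))
  | ax4 (A : Formula) :
      GLProof (Formula.imp (Formula.box A) (Formula.box (Formula.box A)))
  | axLob (A : Formula) : GLProof (lobAx A)
  | mp {A B : Formula} : GLProof (Formula.imp A B) → GLProof A → GLProof B
  | nec {A : Formula} : GLProof A → GLProof (Formula.box A)

/-- Classical relational (Kripke) satisfaction. -/
def sat {W : Type} (R : W → W → Prop) (V : W → ℕ → Prop) : W → Formula → Prop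
  | w, Formula.atom n  => V w n
  | _, Formula.bot     => False
  | w, Formula.and A B => sat R V w A ∧ sat R V w B
  | w, Formula.or  A B => sat R V w A ∨ sat R V w B
  | w, Formula.imp A B => sat R V w A → sat R V w B
  | w, Formula.box A   => ∀ v, R w v → sat R V v A
  | w, Formula.dia A   => ∃ v, R w v ∧ sat R V v A

/-- A frame satisfies `A` if every model based on it satisfies `A` at every world. -/
def FrameSat (W : Type) (R : W → W → Prop) (A : Formula) : Prop :=
  ∀ (V : W → ℕ → Prop) (w : W), sat R V w A

/-- A relation is terminating if it admits no infinite path. -/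
def Terminating {α : Type} (r : α → α → Prop) : Prop :=
  ¬ ∃ f : ℕ → α, ∀ n, r (f n) (f (n + 1))

/-! ### Labelled sequents -/

/-- A labelled formula `x : A`. -/
abbrev LFormula := ℕ × Formula

/-- A labelled sequent `R, Γ ⇒ Δ`: a set of relational atoms and two
multisets of labelled formulas. -/
structure Sequent : Type where
  rel : Set (ℕ × ℕ)
  left : Multiset LFormula
  right : Multiset LFormula

/-- Variables occurring in a set of relational atoms. -/
def relVars (R : Set (ℕ × ℕ)) : Set ℕ := {z | ∃ w, (z, w) ∈ R ∨ (w, z) ∈ R}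

/-- Labels occurring in a multiset of labelled formulas. -/
def mLabels (Γ : Multiset LFormula) : Set ℕ := {z | ∃ A, (z, A) ∈ Γ}

/-- The variables/labels occurring in a sequent. -/
def Sequent.vars (S : Sequent) : Set ℕ := relVars S.rel ∪ mLabels S.left ∪ mLabels S.right

/-- `y` is a fresh label for the sequent `S`. -/
def Fresh (y : ℕ) (S : Sequent) : Prop := y ∉ S.vars

/-- A sequent has exactly one formula on the right-hand side. -/
def SingleRHS (S : Sequent) : Prop := Multiset.card S.right = 1

/-- Rule instances of the standard labelled calculi, presented as a relation
between a conclusion and its list of premisses.  The flag `tr` enables the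
transitivity rule (giving ℓK4 rather than ℓK), the flag `thn` enables the
relational thinning rule `th`, and the flag `ir` imposes the restriction that
the →-right and □-right rules have exactly one formula on the RHS (giving the
multi-succedent intuitionistic system mℓIK4). -/
inductive Rule (tr thn ir : Bool) : Sequent → List Sequent → Prop
  | id (R : Set (ℕ × ℕ)) (x p : ℕ) :
      Rule tr thn ir ⟨R, {(x, Formula.atom p)}, {(x, Formula.atom p)}⟩ []
  | cut (R : Set (ℕ × ℕ)) (Γ Γ' Δ Δ' : Multiset LFormula) (x : ℕ) (A : Formula) :
      Rule tr thn ir ⟨R, Γ + Γ', Δ + Δ'⟩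
        [⟨R, Γ, (x, A) ::ₘ Δ⟩, ⟨R, (x, A) ::ₘ Γ', Δ'⟩]
  | wkL (R : Set (ℕ × ℕ)) (Γ Δ : Multiset LFormula) (x : ℕ) (A : Formula) :
      Rule tr thn ir ⟨R, (x, A) ::ₘ Γ, Δ⟩ [⟨R, Γ, Δ⟩]
  | wkR (R : Set (ℕ × ℕ)) (Γ Δ : Multiset LFormula) (x : ℕ) (A : Formula) :
      Rule tr thn ir ⟨R, Γ, (x, A) ::ₘ Δ⟩ [⟨R, Γ, Δ⟩]
  | ctrL (R : Set (ℕ × ℕ)) (Γ Δ : Multiset LFormula) (x : ℕ) (A : Formula) :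
      Rule tr thn ir ⟨R, (x, A) ::ₘ Γ, Δ⟩ [⟨R, (x, A) ::ₘ (x, A) ::ₘ Γ, Δ⟩]
  | ctrR (R : Set (ℕ × ℕ)) (Γ Δ : Multiset LFormula) (x : ℕ) (A : Formula) :
      Rule tr thn ir ⟨R, Γ, (x, A) ::ₘ Δ⟩ [⟨R, Γ, (x, A) ::ₘ (x, A) ::ₘ Δ⟩]
  | th (R R' : Set (ℕ × ℕ)) (Γ Δ : Multiset LFormula) :
      thn = true → Rule tr thn ir ⟨R ∪ R', Γ, Δ⟩ [⟨R, Γ, Δ⟩]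
  | botL (R : Set (ℕ × ℕ)) (Γ Δ : Multiset LFormula) (x : ℕ) :
      Rule tr thn ir ⟨R, (x, Formula.bot) ::ₘ Γ, Δ⟩ []
  | impL (R : Set (ℕ × ℕ)) (Γ Γ' Δ Δ' : Multiset LFormula) (x : ℕ) (A B : Formula) :
      Rule tr thn ir ⟨R, (x, Formula.imp A B) ::ₘ (Γ + Γ'), Δ + Δ'⟩
        [⟨R, Γ, (x, A) ::ₘ Δ⟩, ⟨R, (x, B) ::ₘ Γ', Δ'⟩]
  | impR (R : Set (ℕ × ℕ)) (Γ Δ : Multiset LFormula) (x : ℕ) (A B : Formula) :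
      (ir = true → Δ = 0) →
      Rule tr thn ir ⟨R, Γ, (x, Formula.imp A B) ::ₘ Δ⟩ [⟨R, (x, A) ::ₘ Γ, (x, B) ::ₘ Δ⟩]
  | andL₁ (R : Set (ℕ × ℕ)) (Γ Δ : Multiset LFormula) (x : ℕ) (A B : Formula) :
      Rule tr thn ir ⟨R, (x, Formula.and A B) ::ₘ Γ, Δ⟩ [⟨R, (x, A) ::ₘ Γ, Δ⟩]
  | andL₂ (R : Set (ℕ × ℕ)) (Γ Δ : Multiset LFormula) (x : ℕ) (A B : Formula) :
      Rule tr thn ir ⟨R, (x, Formula.and A B) ::ₘ Γ, Δ⟩ [⟨R, (x, B) ::ₘ Γ, Δ⟩]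
  | orL (R : Set (ℕ × ℕ)) (Γ Δ : Multiset LFormula) (x : ℕ) (A B : Formula) :
      Rule tr thn ir ⟨R, (x, Formula.or A B) ::ₘ Γ, Δ⟩
        [⟨R, (x, A) ::ₘ Γ, Δ⟩, ⟨R, (x, B) ::ₘ Γ, Δ⟩]
  | orR₁ (R : Set (ℕ × ℕ)) (Γ Δ : Multiset LFormula) (x : ℕ) (A B : Formula) :
      Rule tr thn ir ⟨R, Γ, (x, Formula.or A B) ::ₘ Δ⟩ [⟨R, Γ, (x, A) ::ₘ Δ⟩]
  | orR₂ (R : Set (ℕ × ℕ)) (Γ Δ : Multiset LFormula) (x : ℕ) (A B : Formula) :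
      Rule tr thn ir ⟨R, Γ, (x, Formula.or A B) ::ₘ Δ⟩ [⟨R, Γ, (x, B) ::ₘ Δ⟩]
  | andR (R : Set (ℕ × ℕ)) (Γ Δ : Multiset LFormula) (x : ℕ) (A B : Formula) :
      Rule tr thn ir ⟨R, Γ, (x, Formula.and A B) ::ₘ Δ⟩
        [⟨R, Γ, (x, A) ::ₘ Δ⟩, ⟨R, Γ, (x, B) ::ₘ Δ⟩]
  | diaL (R : Set (ℕ × ℕ)) (Γ Δ : Multiset LFormula) (x y : ℕ) (A : Formula) :
      Fresh y ⟨R, (x, Formula.dia A) ::ₘ Γ, Δ⟩ →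
      Rule tr thn ir ⟨R, (x, Formula.dia A) ::ₘ Γ, Δ⟩
        [⟨insert (x, y) R, (y, A) ::ₘ Γ, Δ⟩]
  | diaR (R : Set (ℕ × ℕ)) (Γ Δ : Multiset LFormula) (x y : ℕ) (A : Formula) :
      (x, y) ∈ R →
      Rule tr thn ir ⟨R, Γ, (x, Formula.dia A) ::ₘ Δ⟩ [⟨R, Γ, (y, A) ::ₘ Δ⟩]
  | boxR (R : Set (ℕ × ℕ)) (Γ Δ : Multiset LFormula) (x y : ℕ) (A : Formula) :
      (ir = true → Δ = 0) →
      Fresh y ⟨R, Γ, (x, Formula.box A) ::ₘ Δ⟩ →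
      Rule tr thn ir ⟨R, Γ, (x, Formula.box A) ::ₘ Δ⟩
        [⟨insert (x, y) R, Γ, (y, A) ::ₘ Δ⟩]
  | boxL (R : Set (ℕ × ℕ)) (Γ Δ : Multiset LFormula) (x y : ℕ) (A : Formula) :
      (x, y) ∈ R →
      Rule tr thn ir ⟨R, (x, Formula.box A) ::ₘ Γ, Δ⟩ [⟨R, (y, A) ::ₘ Γ, Δ⟩]
  | trans (R : Set (ℕ × ℕ)) (Γ Δ : Multiset LFormula) (x y z : ℕ) :
      tr = true → (x, y) ∈ R → (y, z) ∈ R →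
      Rule tr thn ir ⟨R, Γ, Δ⟩ [⟨insert (x, z) R, Γ, Δ⟩]

/-- The labelled calculus ℓK. -/
def RuleLK : Sequent → List Sequent → Prop := Rule false true false

/-- The labelled calculus ℓK4 (= ℓK + transitivity rule). -/
def RuleLK4 : Sequent → List Sequent → Prop := Rule true true false

/-- ℓK4 without the thinning rule th. -/
def RuleLK4NoTh : Sequent → List Sequent → Prop := Rule true false false

/-- The multi-succedent intuitionistic calculus mℓIK4: ℓK4 where the →-right
and □-right rules must have exactly one formula on the RHS. -/
def RuleMLIK4 : Sequent → List Sequent → Prop := Rule true true true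

/-- The single-succedent intuitionistic calculus ℓIK4: the restriction of ℓK4
to sequents with exactly one formula on the RHS. -/
def RuleLIK4 : Sequent → List Sequent → Prop :=
  fun S ps => RuleLK4 S ps ∧ SingleRHS S ∧ ∀ p ∈ ps, SingleRHS p

/-- ℓIK4 without the thinning rule th. -/
def RuleLIK4NoTh : Sequent → List Sequent → Prop :=
  fun S ps => RuleLK4NoTh S ps ∧ SingleRHS S ∧ ∀ p ∈ ps, SingleRHS p

/-- Finite (wellfounded) derivability from a set of rule instances. -/
inductive Deriv (rule : Sequent → List Sequent → Prop) : Sequent → Prop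
  | step (S : Sequent) (prems : List Sequent) :
      rule S prems → (∀ S' ∈ prems, Deriv rule S') → Deriv rule S

/-! ### Non-wellfounded proofs -/

/-- A (possibly infinite) preproof of `S₀`: a tree of sequents, given as a
partial labelling of finite paths (lists of child indices), whose root is `S₀`
and in which every node is the conclusion of a rule instance whose premisses
are exactly its children. -/
structure Preproof (rule : Sequent → List Sequent → Prop) (S₀ : Sequent) : Type where
  node : List ℕ → Option Sequent
  root : node [] = some S₀
  children : ∀ p S, node p = some S →
    ∃ prems : List Sequent, rule S prems ∧ ∀ i : ℕ, node (p ++ [i]) = prems[i]?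

/-- The path of length `n` along the branch determined by `f`. -/
def branchPath (f : ℕ → ℕ) (n : ℕ) : List ℕ := (List.range n).map f

/-- An infinite sequence of sequents (a branch) has a progressing trace:
from some point on there are labels `x i` occurring in the `i`-th sequent with
either `x (i+1) = x i` or the relational atom `(x i) R (x (i+1))` occurring in
the `i`-th sequent, the latter happening infinitely often. -/
def Progressing (Sb : ℕ → Sequent) : Prop :=
  ∃ (k : ℕ) (x : ℕ → ℕ),
    (∀ i, k ≤ i → x i ∈ (Sb i).vars) ∧
    (∀ i, k ≤ i → x (i + 1) = x i ∨ (x i, x (i + 1)) ∈ (Sb i).rel) ∧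
    (∀ n, ∃ i, n ≤ i ∧ k ≤ i ∧ (x i, x (i + 1)) ∈ (Sb i).rel)

/-- `S₀` has an ∞-proof: a preproof all of whose infinite branches have a
progressing trace. -/
def InfProof (rule : Sequent → List Sequent → Prop) (S₀ : Sequent) : Prop :=
  ∃ P : Preproof rule S₀,
    ∀ (f : ℕ → ℕ) (Sb : ℕ → Sequent),
      (∀ n, P.node (branchPath f n) = some (Sb n)) → Progressing Sb

/-! ### Birelational semantics -/

/-- A birelational model on the set of worlds `W`: an intuitionistic partial
order `le`, an accessibility relation `acc` satisfying the frame conditions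
(F1) and (F2), and a monotone valuation. -/
structure Birel (W : Type) : Type where
  le : W → W → Prop
  le_refl : ∀ w, le w w
  le_trans : ∀ u v w, le u v → le v w → le u w
  le_antisymm : ∀ u v, le u v → le v u → u = v
  acc : W → W → Prop
  F1 : ∀ w w' v, le w w' → acc w v → ∃ v', le v v' ∧ acc w' v'
  F2 : ∀ w v v', acc w v → le v v' → ∃ w', le w w' ∧ acc w' v'
  val : W → ℕ → Prop
  val_mono : ∀ w w', le w w' → ∀ p, val w p → val w' p

/-- Birelational satisfaction. -/
def bsat {W : Type} (B : Birel W) : W → Formula → Prop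
  | w, Formula.atom p  => B.val w p
  | _, Formula.bot     => False
  | w, Formula.and A C => bsat B w A ∧ bsat B w C
  | w, Formula.or  A C => bsat B w A ∨ bsat B w C
  | w, Formula.imp A C => ∀ w', B.le w w' → bsat B w' A → bsat B w' C
  | w, Formula.box A   => ∀ w' v, B.le w w' → B.acc w' v → bsat B v A
  | w, Formula.dia A   => ∃ v, B.acc w v ∧ bsat B v A

/-- Membership in the class birel-IGL: the accessibility relation is
transitive and the composite ≤;R is terminating. -/
def BirelIGL {W : Type} (B : Birel W) : Prop :=
  Transitive B.acc ∧ Terminating (fun u v => ∃ m, B.le u m ∧ B.acc m v)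

/-- An interpretation of a sequent into a birelational model: a map on labels
sending relational atoms of the sequent to accessibility-related worlds. -/
def Interp {W : Type} (B : Birel W) (I : ℕ → W) (S : Sequent) : Prop :=
  ∀ x y, (x, y) ∈ S.rel → B.acc (I x) (I y)

/-- `B, I ⊨ S`. -/
def seqSat {W : Type} (B : Birel W) (I : ℕ → W) (S : Sequent) : Prop :=
  (∀ q ∈ S.left, bsat B (I q.1) q.2) → ∃ q ∈ S.right, bsat B (I q.1) q.2

/-- `B ⊨ S`: satisfaction under every interpretation. -/
def seqValid {W : Type} (B : Birel W) (S : Sequent) : Prop :=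
  ∀ I : ℕ → W, Interp B I S → seqSat B I S

/-- Conjunction of a nonempty list of formulas `A ∧ B₁ ∧ ... ∧ Bₙ`. -/
def conjList : Formula → List Formula → Formula
  | A, [] => A
  | A, B :: l => Formula.and A (conjList B l)

/-! ### (Quasi-)trees -/

/-- A set of relational atoms is a tree: there is a root from which every
other variable is reachable by a unique path of relational atoms. -/
def IsTree (R : Set (ℕ × ℕ)) : Prop :=
  ∃ x₀ ∈ relVars R, ∀ x ∈ relVars R, x ≠ x₀ →
    ∃! l : List ℕ, l ≠ [] ∧ List.Chain (fun a b => (a, b) ∈ R) x₀ l ∧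
      l.getLast? = some x

/-- A quasi-tree: squeezed between a tree and its transitive closure. -/
def IsQuasiTree (R : Set (ℕ × ℕ)) : Prop :=
  ∃ R₀ : Set (ℕ × ℕ), IsTree R₀ ∧ R₀ ⊆ R ∧
    ∀ q ∈ R, Relation.TransGen (fun a b => (a, b) ∈ R₀) q.1 q.2

/-- The (single-succedent) sequent `R, Γ ⇒ x:A` is quasi-tree-like. -/
def QuasiTreeLike (R : Set (ℕ × ℕ)) (Γ : Multiset LFormula) (x : ℕ) : Prop :=
  (R = ∅ ∧ mLabels Γ ⊆ {x}) ∨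
  (IsQuasiTree R ∧ mLabels Γ ∪ {x} ⊆ relVars R)

/-! ### Kripke predicate structures -/

/-- A Kripke (predicate) structure: partially ordered worlds, growing nonempty
domains, monotone interpretations of the unary predicates, and growing binary
relations on the domains. -/
structure Kripke (W D : Type) : Type where
  le : W → W → Prop
  le_refl : ∀ w, le w w
  le_trans : ∀ u v w, le u v → le v w → le u w
  le_antisymm : ∀ u v, le u v → le v u → u = v
  Dom : W → Set D
  Dom_ne : ∀ w, (Dom w).Nonempty
  Dom_mono : ∀ w w', le w w' → Dom w ⊆ Dom w'
  Pr : W → ℕ → Set D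
  Pr_sub : ∀ w p, Pr w p ⊆ Dom w
  Pr_mono : ∀ w w' p, le w w' → Pr w p ⊆ Pr w' p
  Rel : W → D → D → Prop
  Rel_dom : ∀ w d e, Rel w d e → d ∈ Dom w ∧ e ∈ Dom w
  Rel_mono : ∀ w w' d e, le w w' → Rel w d e → Rel w' d e

/-- Satisfaction `K, w ⊨^ρ ⟨A⟩ₓ` of the standard translation of `A`; since the
translation of `A` at `x` has only `x` free, satisfaction is presented through
the value `d = ρ x` of the environment at `x`. -/
def ksat {W D : Type} (K : Kripke W D) : W → D → Formula → Prop
  | w, d, Formula.atom p  => d ∈ K.Pr w p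
  | _, _, Formula.bot     => False
  | w, d, Formula.and A B => ksat K w d A ∧ ksat K w d B
  | w, d, Formula.or  A B => ksat K w d A ∨ ksat K w d B
  | w, d, Formula.imp A B => ∀ w', K.le w w' → ksat K w' d A → ksat K w' d B
  | w, d, Formula.box A   => ∀ w' e, K.le w w' → K.Rel w' d e → ksat K w' e A
  | w, d, Formula.dia A   => ∃ e, K.Rel w d e ∧ ksat K w e A

/-- Membership in the class pred-IGL: each `R_w` is transitive and the
composite `≤_{D_W} ; R_{D_W}` on pairs `(w, d)` with `d ∈ D_w` is terminating. -/
def PredIGL {W D : Type} (K : Kripke W D) : Prop :=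
  (∀ w, Transitive (K.Rel w)) ∧
  ¬ ∃ (f : ℕ → W) (g : ℕ → D),
      ∀ n, g n ∈ K.Dom (f n) ∧ K.le (f n) (f (n + 1)) ∧
        K.Rel (f (n + 1)) (g n) (g (n + 1))

open Filter

/-!
In the proof search game the prover picks a rule of the calculus, cuts included, and the refuter
picks one of its premisses. The prover wins the infinite plays that produce an infinite path of
relational atoms, so a winning strategy unfolds to an ∞-proof. If `x : A` has no ∞-proof, ordinal
bounds on the visits to each component of labels created by `◇`-left yield a strategy of the
refuter that visits every component only finitely often.

Löb's axiom allows `□`-right to assume `□B` at the label at which it has to prove `B`. Hence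
`□`-right is needed at most once for each `□B` along a path of labels, and an infinite path would
have to remain in one component from some point on, although that component is finite. The
saturated histories of the refuter's strategy, ordered by extension, thus form a countermodel in
pred-IGL.
-/

/-! ### Progressing traces -/

theorem Progressing.of_shift {Sb : ℕ → Sequent} (k : ℕ)
    (h : Progressing fun i => Sb (i + k)) : Progressing Sb := by
  obtain ⟨k₀, x, vars, trace, progress⟩ := h
  have shift : ∀ i, k₀ + k ≤ i → ∃ j, i = j + k ∧ k₀ ≤ j := fun i hi => ⟨i - k, by omega, by omega⟩
  have sub_succ : ∀ j, j + k + 1 - k = j + 1 := fun j => by omega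
  refine ⟨k₀ + k, fun i => x (i - k), fun i hi => ?_, fun i hi => ?_, fun n => ?_⟩
  · obtain ⟨j, rfl, hj⟩ := shift i hi
    simpa only [Nat.add_sub_cancel] using vars j hj
  · obtain ⟨j, rfl, hj⟩ := shift i hi
    simpa only [Nat.add_sub_cancel, sub_succ] using trace j hj
  · obtain ⟨j, hnj, hj, hrel⟩ := progress n
    refine ⟨j + k, by omega, by omega, ?_⟩
    simpa only [Nat.add_sub_cancel, sub_succ] using hrel

theorem exists_slow_index (N : ℕ → ℕ) :
    ∃ J : ℕ → ℕ, (∀ n j, j < J n → N j ≤ n) ∧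
      (∀ n, J (n + 1) = J n ∨ J (n + 1) = J n + 1) ∧
      ∀ n, ∃ m, n ≤ m ∧ J (m + 1) = J m + 1 := by
  let J : ℕ → ℕ := Nat.rec 0 fun n j => if N j ≤ n + 1 then j + 1 else j
  have J_succ : ∀ n, J (n + 1) = if N (J n) ≤ n + 1 then J n + 1 else J n := fun _ => rfl
  refine ⟨J, fun n => ?_, fun n => ?_, fun n => ?_⟩
  · induction n with
    | zero => exact fun j hj => absurd hj (Nat.not_lt_zero j)
    | succ n ih =>
      intro j hj
      rw [J_succ] at hj
      split_ifs at hj with hN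
      · rcases Nat.lt_succ_iff_lt_or_eq.mp hj with hj | rfl
        · exact (ih j hj).trans n.le_succ
        · exact hN
      · exact (ih j hj).trans n.le_succ
  · rw [J_succ]
    split_ifs <;> simp
  · by_contra! stuck
    have const : ∀ m, J (n + m) = J n := by
      intro m
      induction m with
      | zero => rfl
      | succ m ih =>
        rw [← ih]
        have := stuck (n + m) (by omega)
        rw [← add_assoc, J_succ] at *
        split_ifs at * <;> simp_all
    have := stuck (n + N (J n)) (by omega)
    rw [J_succ, const, if_pos (by omega)] at this
    exact this rfl

-- A trace follows `d`, taking its next step only once that step has become available for good.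
theorem progressing_of_eventually_path {Sb : ℕ → Sequent} (d : ℕ → ℕ)
    (h : ∀ k, ∀ᶠ n in atTop, (d k, d (k + 1)) ∈ (Sb n).rel) : Progressing Sb := by
  simp only [eventually_atTop] at h
  choose N hN using h
  obtain ⟨J, J_lt, J_succ, J_grows⟩ := exists_slow_index N
  have step : ∀ n, J (n + 1) = J n + 1 → (d (J n), d (J (n + 1))) ∈ (Sb (n + 1)).rel :=
    fun n hn => by
      rw [hn]
      exact hN _ _ (J_lt (n + 1) (J n) (by omega))
  refine Progressing.of_shift 1 ⟨N 0, fun i => d (J i), fun i hi => ?_, fun i _ => ?_, fun n => ?_⟩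
  · change d (J i) ∈ (Sb (i + 1)).vars
    rcases hJ : J i with _ | j
    · exact Or.inl (Or.inl ⟨_, Or.inl (hN 0 (i + 1) (by omega))⟩)
    · exact Or.inl (Or.inl ⟨_, Or.inr (hN j (i + 1) ((J_lt i j (by omega)).trans i.le_succ))⟩)
  · exact (J_succ i).imp (congrArg d) (step i)
  · obtain ⟨m, hm, hJ⟩ := J_grows (max n (N 0))
    exact ⟨m, by omega, by omega, step m hJ⟩

/-! ### Building ∞-proofs -/

theorem branchPath_succ (f : ℕ → ℕ) (n : ℕ) :
    branchPath f (n + 1) = branchPath f n ++ [f n] := by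
  simp only [branchPath, List.range_succ, List.map_append, List.map_cons, List.map_nil]

/-- The state reached from a given state of a finitely branching transition system by following
a list of child indices; `none` if an index is out of range. -/
def followPath {T : Type*} (next : T → List T) : T → List ℕ → Option T
  | s, [] => some s
  | s, i :: p => (next s)[i]?.bind fun t => followPath next t p

theorem followPath_append_singleton {T : Type*} (next : T → List T) (s : T) (p : List ℕ) (i : ℕ) :
    followPath next s (p ++ [i]) = (followPath next s p).bind fun t => (next t)[i]? := by
  induction p generalizing s with
  | nil => simp only [List.nil_append, followPath, Option.bind_fun_some, Option.bind_some]
  | cons j p ih => simp only [List.cons_append, followPath, ih, Option.bind_assoc]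

section

variable {rule : Sequent → List Sequent → Prop} {T : Type*}

theorem infProof_of_system (seq : T → Sequent) (E : T → T → Prop) (s₀ : T)
    (expand : ∀ s, ∃ ts : List T, rule (seq s) (ts.map seq) ∧ ∀ t ∈ ts, E s t)
    (progress : ∀ g : ℕ → T, g 0 = s₀ → (∀ n, E (g n) (g (n + 1))) →
      Progressing fun n => seq (g n)) :
    InfProof rule (seq s₀) := by
  choose next next_rule next_edge using expand
  refine ⟨⟨fun p => (followPath next s₀ p).map seq, rfl, fun p S hS => ?_⟩, fun f Sb hSb => ?_⟩
  · obtain ⟨t, ht, rfl⟩ := Option.map_eq_some_iff.mp hS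
    refine ⟨_, next_rule t, fun i => ?_⟩
    simp only [followPath_append_singleton, ht, Option.bind_some, List.getElem?_map]
  · choose g hg seq_g using fun n => Option.map_eq_some_iff.mp (hSb n)
    have g_zero : g 0 = s₀ := Option.some_injective _ (hg 0).symm
    have g_step : ∀ n, E (g n) (g (n + 1)) := fun n => by
      have h := hg (n + 1)
      rw [branchPath_succ, followPath_append_singleton, hg n, Option.bind_some] at h
      exact next_edge _ _ (List.mem_of_getElem? h)
    simpa only [seq_g] using progress g g_zero g_step

/-- A node of a (chosen) ∞-proof of some sequent. -/
structure ProofNode (rule : Sequent → List Sequent → Prop) where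
  root : {S // InfProof rule S}
  path : List ℕ
  seq : Sequent
  node_path : root.2.choose.node path = some seq

/-- `q` is an immediate successor of `p` in the same ∞-proof. -/
def ProofNode.Child (p q : ProofNode rule) : Prop :=
  q.root = p.root ∧ ∃ i, q.path = p.path ++ [i]

theorem ProofNode.exists_children (p : ProofNode rule) :
    ∃ qs : List (ProofNode rule), rule p.seq (qs.map ProofNode.seq) ∧ ∀ q ∈ qs, p.Child q := by
  obtain ⟨prems, hrule, hnode⟩ := p.root.2.choose.children p.path p.seq p.node_path
  let child (i : Fin prems.length) : ProofNode rule :=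
    ⟨p.root, p.path ++ [(i : ℕ)], prems[i], by
      rw [hnode, List.getElem?_eq_getElem i.2, Fin.getElem_fin]⟩
  refine ⟨(List.finRange prems.length).map child, ?_, fun q hq => ?_⟩
  · have : (List.finRange prems.length).map (ProofNode.seq ∘ child) = prems :=
      List.ext_getElem (by simp) fun i _ _ => by simp [child]
    rwa [List.map_map, this]
  · obtain ⟨i, -, rfl⟩ := List.mem_map.mp hq
    exact ⟨rfl, i, rfl⟩

theorem ProofNode.progressing_of_run (p : ℕ → ProofNode rule) (path_zero : (p 0).path = [])
    (child : ∀ n, (p n).Child (p (n + 1))) : Progressing fun n => (p n).seq := by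
  choose root_succ f path_succ using child
  have root_eq : ∀ n, (p n).root = (p 0).root := fun n => by
    induction n with
    | zero => rfl
    | succ n ih => rw [root_succ, ih]
  have path_eq : ∀ n, (p n).path = branchPath f n := fun n => by
    induction n with
    | zero => exact path_zero
    | succ n ih => rw [path_succ, ih, branchPath_succ]
  refine (p 0).root.2.choose_spec f _ fun n => ?_
  rw [← path_eq, ← root_eq n]
  exact (p n).node_path

theorem exists_rootNode {S : Sequent} (h : InfProof rule S) :
    ∃ p : ProofNode rule, p.path = [] ∧ p.seq = S :=
  ⟨⟨⟨S, h⟩, [], S, h.choose.root⟩, rfl, rfl⟩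

/-- The transitions of a system in which every state whose sequent is already provable is
expanded by its chosen ∞-proof. -/
def GlueEdge (rule : Sequent → List Sequent → Prop) (seq : T → Sequent) (E : T → T → Prop) :
    T ⊕ ProofNode rule → T ⊕ ProofNode rule → Prop
  | .inl s, .inl t => E s t
  | .inl s, .inr q => ∃ p : ProofNode rule, p.path = [] ∧ p.seq = seq s ∧ p.Child q
  | .inr _, .inl _ => False
  | .inr p, .inr q => p.Child q

theorem GlueEdge.progressing_of_enter {seq : T → Sequent} {E : T → T → Prop}
    {g : ℕ → T ⊕ ProofNode rule} (edge : ∀ n, GlueEdge rule seq E (g n) (g (n + 1)))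
    {k : ℕ} {s : T} {q₀ : ProofNode rule} (hs : g k = .inl s) (hq₀ : g (k + 1) = .inr q₀) :
    Progressing fun n => Sum.elim seq ProofNode.seq (g n) := by
  have inr_of_enter : ∀ n, ∃ q, g (n + 1 + k) = .inr q := fun n => by
    induction n with
    | zero => exact ⟨q₀, by rw [← hq₀, add_comm, add_comm 0]⟩
    | succ n ih =>
      obtain ⟨q, hq⟩ := ih
      have h := edge (n + 1 + k)
      rw [hq, show n + 1 + k + 1 = n + 1 + 1 + k by omega] at h
      rcases hg : g (n + 1 + 1 + k) with t | q'
      · exact (hg ▸ h : GlueEdge rule seq E (.inr q) (.inl t)).elim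
      · exact ⟨q', rfl⟩
  choose q hq using inr_of_enter
  obtain ⟨p, p_path, p_seq, p_child⟩ : ∃ p : ProofNode rule, p.path = [] ∧ p.seq = seq s ∧
      p.Child (q 0) := by
    have h := edge k
    rwa [hs, show k + 1 = 0 + 1 + k by omega, hq] at h
  let run : ℕ → ProofNode rule := fun n => n.casesOn p q
  have run_seq : ∀ n, (run n).seq = Sum.elim seq ProofNode.seq (g (n + k)) := by
    rintro (_ | n)
    · rw [zero_add, hs]; exact p_seq
    · rw [hq]; rfl
  have run_child : ∀ n, (run n).Child (run (n + 1)) := by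
    rintro (_ | n)
    · exact p_child
    · have h := edge (n + 1 + k)
      rwa [hq, show n + 1 + k + 1 = n + 1 + 1 + k by omega, hq] at h
  refine Progressing.of_shift k ?_
  simpa only [run_seq] using ProofNode.progressing_of_run run p_path run_child

theorem exists_enter_of_not_forall_inl {α β : Type*} {g : ℕ → α ⊕ β} {a : α} (g_zero : g 0 = .inl a)
    (h : ¬ ∀ n, ∃ a, g n = .inl a) : ∃ k a b, g k = .inl a ∧ g (k + 1) = .inr b := by
  by_contra! stay
  refine h fun n => ?_
  induction n with
  | zero => exact ⟨a, g_zero⟩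
  | succ n ih =>
    obtain ⟨a, ha⟩ := ih
    rcases hg : g (n + 1) with a' | b
    · exact ⟨a', rfl⟩
    · exact absurd hg (stay n a b ha)

theorem infProof_of_openSystem (seq : T → Sequent) (E : T → T → Prop) (s₀ : T)
    (expand : ∀ s, InfProof rule (seq s) ∨
      ∃ ts : List T, rule (seq s) (ts.map seq) ∧ ∀ t ∈ ts, E s t)
    (progress : ∀ g : ℕ → T, g 0 = s₀ → (∀ n, E (g n) (g (n + 1))) →
      Progressing fun n => seq (g n)) :
    InfProof rule (seq s₀) := by
  refine infProof_of_system (Sum.elim seq ProofNode.seq) (GlueEdge rule seq E) (.inl s₀)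
    (fun node => ?_) fun g g_zero edge => ?_
  · rcases node with s | p
    · rcases expand s with hs | ⟨ts, hrule, hE⟩
      · obtain ⟨p, p_path, p_seq⟩ := exists_rootNode hs
        obtain ⟨qs, hrule, hchild⟩ := p.exists_children
        refine ⟨qs.map .inr, ?_, List.forall_mem_map.mpr fun q hq =>
          ⟨p, p_path, p_seq, hchild q hq⟩⟩
        simpa only [List.map_map, Sum.elim_inl, Sum.elim_comp_inr, p_seq] using hrule
      · refine ⟨ts.map .inl, ?_, List.forall_mem_map.mpr hE⟩
        simpa only [List.map_map, Sum.elim_inl, Sum.elim_comp_inl] using hrule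
    · obtain ⟨qs, hrule, hchild⟩ := p.exists_children
      refine ⟨qs.map .inr, ?_, List.forall_mem_map.mpr hchild⟩
      simpa only [List.map_map, Sum.elim_inr, Sum.elim_comp_inr] using hrule
  · by_cases stay : ∀ n, ∃ s, g n = .inl s
    · choose s hs using stay
      have s_edge : ∀ n, E (s n) (s (n + 1)) := fun n => by
        have h := edge n
        rwa [hs, hs] at h
      simpa only [hs, Sum.elim_inl] using
        progress s (Sum.inl_injective ((hs 0).symm.trans g_zero)) s_edge
    · obtain ⟨k, s, q, hs, hq⟩ := exists_enter_of_not_forall_inl g_zero stay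
      exact GlueEdge.progressing_of_enter edge hs hq

theorem InfProof.step {S : Sequent} (prems : List Sequent) (hrule : rule S prems)
    (hprems : ∀ S' ∈ prems, InfProof rule S') : InfProof rule S := by
  let state := {S' // S' = S ∨ InfProof rule S'}
  refine infProof_of_openSystem (T := state) Subtype.val
    (fun s t => ¬ InfProof rule s.1 ∧ InfProof rule t.1) ⟨S, Or.inl rfl⟩ (fun s => ?_)
    fun g _ edge => absurd (edge 0).2 (edge 1).1
  obtain ⟨s, hs⟩ := s
  by_cases proved : InfProof rule s
  · exact Or.inl proved
  · obtain rfl := hs.resolve_right proved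
    refine Or.inr ⟨prems.attach.map fun p => ⟨p.1, Or.inr (hprems p.1 p.2)⟩, ?_,
      List.forall_mem_map.mpr fun p _ => ⟨proved, hprems p.1 p.2⟩⟩
    rw [List.map_map]
    exact (List.attach_map_subtype_val prems).symm ▸ hrule

/-- `S` has a finite derivation of height at most `n` from leaves satisfying `L`, in which every
conclusion of a rule contains the relational atoms `r`. -/
inductive FiniteDeriv (rule : Sequent → List Sequent → Prop) (r : Set (ℕ × ℕ))
    (L : Sequent → Prop) : ℕ → Sequent → Prop
  | leaf (n : ℕ) (S : Sequent) : L S → FiniteDeriv rule r L n S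
  | step (n : ℕ) (S : Sequent) (prems : List Sequent) : r ⊆ S.rel → rule S prems →
      (∀ S' ∈ prems, FiniteDeriv rule r L n S') → FiniteDeriv rule r L (n + 1) S

section

variable {r : Set (ℕ × ℕ)} {L : Sequent → Prop} {S : Sequent}

theorem FiniteDeriv.mono {n m : ℕ} (h : FiniteDeriv rule r L n S) (hnm : n ≤ m) :
    FiniteDeriv rule r L m S := by
  induction h generalizing m with
  | leaf n S hL => exact .leaf m S hL
  | step n S prems hr hrule _ ih =>
    obtain ⟨m, rfl⟩ := Nat.exists_eq_add_of_le' (Nat.one_le_of_lt hnm)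
    exact .step m S prems hr hrule fun S' hS' => ih S' hS' (by omega)

theorem FiniteDeriv.exists_step (prems : List Sequent) (hr : r ⊆ S.rel) (hrule : rule S prems)
    (hprems : ∀ S' ∈ prems, ∃ n, FiniteDeriv rule r L n S') : ∃ n, FiniteDeriv rule r L n S := by
  choose! height hheight using hprems
  refine ⟨_, .step (prems.map height).sum S prems hr hrule fun S' hS' => ?_⟩
  exact (hheight S' hS').mono (List.single_le_sum (fun _ _ => Nat.zero_le _) _
    (List.mem_map_of_mem hS'))

end

theorem exists_subsequence_of_stuttering {E : T → T → Prop} (s : ℕ → T) (height : ℕ → ℕ)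
    (h : ∀ i, (s (i + 1) = s i ∧ height (i + 1) < height i) ∨ E (s i) (s (i + 1))) :
    ∃ τ : ℕ → ℕ, s (τ 0) = s 0 ∧ ∀ k, E (s (τ k)) (s (τ (k + 1))) := by
  have exists_edge : ∀ i, ∃ j, s j = s i ∧ E (s j) (s (j + 1)) := fun i => by
    induction hm : height i using Nat.strong_induction_on generalizing i with
    | _ m ih =>
      rcases h i with ⟨stutter, hlt⟩ | hE
      · obtain ⟨j, hj, hE⟩ := ih _ (hm ▸ hlt) (i + 1) rfl
        exact ⟨j, hj.trans stutter, hE⟩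
      · exact ⟨i, rfl, hE⟩
  choose last s_last edge_last using exists_edge
  let τ : ℕ → ℕ := Nat.rec (last 0) fun _ t => last (t + 1)
  have τ_eq_last : ∀ k, ∃ i, τ k = last i := by rintro (_ | k) <;> exact ⟨_, rfl⟩
  refine ⟨τ, s_last 0, fun k => ?_⟩
  obtain ⟨i, hi⟩ := τ_eq_last k
  rw [show s (τ (k + 1)) = s (τ k + 1) from s_last _, hi]
  exact edge_last i

/-- A position inside the finite derivation attached to a state of a macro system: the state, and
a sequent of its derivation with the height still available. -/
structure MacroNode (rule : Sequent → List Sequent → Prop) (seq : T → Sequent)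
    (E : T → T → Prop) where
  state : T
  height : ℕ
  sequent : Sequent
  deriv : FiniteDeriv rule (seq state).rel
    (fun S => InfProof rule S ∨ ∃ t, E state t ∧ seq t = S) height sequent

theorem infProof_of_macroSystem (stutter : ∀ S, rule S [S]) (seq : T → Sequent)
    (E : T → T → Prop) (s₀ : T) (rel_mono : ∀ s t, E s t → (seq s).rel ⊆ (seq t).rel)
    (derive : ∀ s, ∃ n, FiniteDeriv rule (seq s).rel
      (fun S => InfProof rule S ∨ ∃ t, E s t ∧ seq t = S) n (seq s))
    (path : ∀ g : ℕ → T, g 0 = s₀ → (∀ n, E (g n) (g (n + 1))) →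
      ∃ d : ℕ → ℕ, ∀ k, ∃ n, (d k, d (k + 1)) ∈ (seq (g n)).rel) :
    InfProof rule (seq s₀) := by
  obtain ⟨n₀, deriv₀⟩ := derive s₀
  refine infProof_of_openSystem (T := MacroNode rule seq E) MacroNode.sequent
    (fun a b => (seq a.state).rel ⊆ a.sequent.rel ∧
      ((b.state = a.state ∧ b.height < a.height) ∨ E a.state b.state))
    ⟨s₀, n₀, seq s₀, deriv₀⟩ ?_ fun g g_zero edge => ?_
  · rintro ⟨s, n, S, _ | ⟨n, _, prems, hr, hrule, hprems⟩⟩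
    · rename_i leaf
      rcases leaf with hS | ⟨t, hE, rfl⟩
      · exact Or.inl hS
      · obtain ⟨m, deriv⟩ := derive t
        refine Or.inr ⟨[⟨t, m, seq t, deriv⟩], stutter _, List.forall_mem_singleton.mpr ?_⟩
        exact ⟨rel_mono s t hE, Or.inr hE⟩
    · refine Or.inr ⟨prems.attach.map fun p => ⟨s, n, p.1, hprems p.1 p.2⟩, ?_,
        List.forall_mem_map.mpr fun p _ => ⟨hr, Or.inl ⟨rfl, n.lt_succ_self⟩⟩⟩
      rw [List.map_map]
      exact (List.attach_map_subtype_val prems).symm ▸ hrule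
  · have rel_mono_state : Monotone fun i => (seq (g i).state).rel :=
      monotone_nat_of_le_succ fun i => (edge i).2.elim (fun h => by rw [h.1]) (rel_mono _ _)
    obtain ⟨τ, τ_zero, τ_edge⟩ := exists_subsequence_of_stuttering
      (fun i => (g i).state) (fun i => (g i).height) fun i => (edge i).2
    obtain ⟨d, hd⟩ := path (fun k => (g (τ k)).state) (τ_zero.trans (by rw [g_zero])) τ_edge
    refine progressing_of_eventually_path d fun k => ?_
    obtain ⟨n, hn⟩ := hd k
    filter_upwards [eventually_ge_atTop (τ n)] with i hi
    exact (edge i).1 (rel_mono_state hi hn)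

end

/-! ### Derived rules of mℓIK4 -/

/-- Provability in mℓIGL. -/
abbrev Provable (S : Sequent) : Prop := InfProof RuleMLIK4 S

/-- `S` has a finite derivation in mℓIK4 from provable sequents and sequents satisfying `L`, in
which every conclusion of a rule contains the relational atoms `r`. -/
def ReducesTo (r : Set (ℕ × ℕ)) (L : Sequent → Prop) (S : Sequent) : Prop :=
  ∃ n, FiniteDeriv RuleMLIK4 r (fun S' => Provable S' ∨ L S') n S

/-- `Q` is closed under the rules of mℓIK4 whose conclusion contains the relational atoms `r`.
Both `Provable` and `ReducesTo r L` are, so derived rules are stated once for all such `Q`. -/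
def RuleClosed (r : Set (ℕ × ℕ)) (Q : Sequent → Prop) : Prop :=
  ∀ (S : Sequent) (prems : List Sequent), r ⊆ S.rel → RuleMLIK4 S prems →
    (∀ S' ∈ prems, Q S') → Q S

theorem ruleClosed_provable : RuleClosed ∅ Provable :=
  fun _ prems _ hrule hprems => InfProof.step prems hrule hprems

theorem ruleClosed_reducesTo (r : Set (ℕ × ℕ)) (L : Sequent → Prop) :
    RuleClosed r (ReducesTo r L) :=
  fun _ prems hr hrule hprems => FiniteDeriv.exists_step prems hr hrule hprems

theorem reducesTo_of_leaf {r : Set (ℕ × ℕ)} {L : Sequent → Prop} {S : Sequent} (h : L S) :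
    ReducesTo r L S :=
  ⟨0, .leaf 0 S (Or.inr h)⟩

theorem reducesTo_of_provable {r : Set (ℕ × ℕ)} {L : Sequent → Prop} {S : Sequent}
    (h : Provable S) : ReducesTo r L S :=
  ⟨0, .leaf 0 S (Or.inl h)⟩

theorem ruleMLIK4_stutter (S : Sequent) : RuleMLIK4 S [S] := by
  have hrule := Rule.th (tr := true) (thn := true) (ir := true) S.rel ∅ S.left S.right rfl
  rwa [Set.union_empty] at hrule

theorem provable_of_macroSystem {T : Type*} (seq : T → Sequent) (E : T → T → Prop) (s₀ : T)
    (rel_mono : ∀ s t, E s t → (seq s).rel ⊆ (seq t).rel)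
    (derive : ∀ s, ReducesTo (seq s).rel (fun S => ∃ t, E s t ∧ seq t = S) (seq s))
    (path : ∀ g : ℕ → T, g 0 = s₀ → (∀ n, E (g n) (g (n + 1))) →
      ∃ d : ℕ → ℕ, ∀ k, ∃ n, (d k, d (k + 1)) ∈ (seq (g n)).rel) :
    Provable (seq s₀) :=
  infProof_of_macroSystem ruleMLIK4_stutter seq E s₀ rel_mono derive path

theorem of_subset_of_weakening_of_contraction {α : Type*} {P : Multiset α → Prop}
    (weakening : ∀ a s, P s → P (a ::ₘ s)) (contraction : ∀ a s, P (a ::ₘ a ::ₘ s) → P (a ::ₘ s))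
    {s t : Multiset α} (hst : s ⊆ t) (hs : P s) : P t := by
  have weakened : P (t + s) := by
    clear hst
    induction t using Multiset.induction_on with
    | empty => rwa [zero_add]
    | cons a t ih => exact Multiset.cons_add a t s ▸ weakening a _ ih
  clear hs
  induction s using Multiset.induction_on with
  | empty => rwa [add_zero] at weakened
  | cons a s ih =>
    obtain ⟨t, rfl⟩ := Multiset.exists_cons_of_mem (hst (Multiset.mem_cons_self a s))
    rw [Multiset.cons_add, Multiset.add_cons] at weakened
    exact ih (Multiset.cons_subset.mp hst).2 (Multiset.cons_add a t s ▸ contraction _ _ weakened)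

theorem Fresh.anti {y : ℕ} {S S' : Sequent} (hy : Fresh y S') (hrel : S.rel ⊆ S'.rel)
    (hleft : S.left ⊆ S'.left) (hright : S.right ⊆ S'.right) : Fresh y S := by
  rintro ((⟨w, hw⟩ | ⟨A, hA⟩) | ⟨A, hA⟩)
  · exact hy (Or.inl (Or.inl ⟨w, hw.imp (@hrel _) (@hrel _)⟩))
  · exact hy (Or.inl (Or.inr ⟨A, hleft hA⟩))
  · exact hy (Or.inr ⟨A, hright hA⟩)

namespace RuleClosed

variable {r R : Set (ℕ × ℕ)} {Q : Sequent → Prop} {Γ Γ' Δ Δ' : Multiset LFormula}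

theorem one (hQ : RuleClosed r Q) {S S₁ : Sequent} (hrule : RuleMLIK4 S [S₁])
    (h₁ : Q S₁) (hr : r ⊆ S.rel := by simp) : Q S :=
  hQ S [S₁] hr hrule (List.forall_mem_singleton.mpr h₁)

theorem two (hQ : RuleClosed r Q) {S S₁ S₂ : Sequent} (hrule : RuleMLIK4 S [S₁, S₂])
    (h₁ : Q S₁) (h₂ : Q S₂) (hr : r ⊆ S.rel := by simp) : Q S :=
  hQ S [S₁, S₂] hr hrule (List.forall_mem_cons.mpr ⟨h₁, List.forall_mem_singleton.mpr h₂⟩)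

theorem weaken_left (hQ : RuleClosed r Q) (hΓ : Γ ⊆ Γ') (h : Q ⟨R, Γ, Δ⟩)
    (hr : r ⊆ R := by simp) : Q ⟨R, Γ', Δ⟩ :=
  of_subset_of_weakening_of_contraction (P := fun Γ => Q ⟨R, Γ, Δ⟩)
    (fun a s hs => hQ.one (Rule.wkL R s Δ a.1 a.2) hs hr)
    (fun a s hs => hQ.one (Rule.ctrL R s Δ a.1 a.2) hs hr) hΓ h

theorem weaken_right (hQ : RuleClosed r Q) (hΔ : Δ ⊆ Δ') (h : Q ⟨R, Γ, Δ⟩)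
    (hr : r ⊆ R := by simp) : Q ⟨R, Γ, Δ'⟩ :=
  of_subset_of_weakening_of_contraction (P := fun Δ => Q ⟨R, Γ, Δ⟩)
    (fun a s hs => hQ.one (Rule.wkR R Γ s a.1 a.2) hs hr)
    (fun a s hs => hQ.one (Rule.ctrR R Γ s a.1 a.2) hs hr) hΔ h

theorem weaken (hQ : RuleClosed r Q) (hΓ : Γ ⊆ Γ') (hΔ : Δ ⊆ Δ') (h : Q ⟨R, Γ, Δ⟩)
    (hr : r ⊆ R := by simp) : Q ⟨R, Γ', Δ'⟩ :=
  hQ.weaken_right hΔ (hQ.weaken_left hΓ h hr) hr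

theorem thin (hQ : RuleClosed r Q) {R' : Set (ℕ × ℕ)} (hR : R ⊆ R') (h : Q ⟨R, Γ, Δ⟩)
    (hr : r ⊆ R := by simp) : Q ⟨R', Γ, Δ⟩ := by
  have hrule := Rule.th (tr := true) (thn := true) (ir := true) R R' Γ Δ rfl
  rw [Set.union_eq_self_of_subset_left hR] at hrule
  exact hQ.one hrule h (hr.trans hR)

theorem cut (hQ : RuleClosed r Q) (x : ℕ) (A : Formula) (h₁ : Q ⟨R, Γ, (x, A) ::ₘ Δ⟩)
    (h₂ : Q ⟨R, (x, A) ::ₘ Γ, Δ⟩) (hr : r ⊆ R := by simp) : Q ⟨R, Γ, Δ⟩ :=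
  hQ.weaken (Γ := Γ + Γ) (Δ := Δ + Δ) (fun _ h => (Multiset.mem_add.mp h).elim id id)
    (fun _ h => (Multiset.mem_add.mp h).elim id id)
    (hQ.two (Rule.cut R Γ Γ Δ Δ x A) h₁ h₂ hr) hr

theorem impL (hQ : RuleClosed r Q) {x : ℕ} {A B : Formula} (hmem : (x, A.imp B) ∈ Γ)
    (h₁ : Q ⟨R, Γ, (x, A) ::ₘ Δ⟩) (h₂ : Q ⟨R, (x, B) ::ₘ Γ, Δ⟩) (hr : r ⊆ R := by simp) :
    Q ⟨R, Γ, Δ⟩ :=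
  hQ.weaken (Γ := (x, A.imp B) ::ₘ (Γ + Γ)) (Δ := Δ + Δ)
    (Multiset.cons_subset.mpr ⟨hmem, fun _ h => (Multiset.mem_add.mp h).elim id id⟩)
    (fun _ h => (Multiset.mem_add.mp h).elim id id)
    (hQ.two (Rule.impL R Γ Γ Δ Δ x A B) h₁ h₂ hr) hr

theorem impR (hQ : RuleClosed r Q) {x : ℕ} {A B : Formula} (hmem : (x, A.imp B) ∈ Δ)
    (h : Q ⟨R, (x, A) ::ₘ Γ, {(x, B)}⟩) (hr : r ⊆ R := by simp) : Q ⟨R, Γ, Δ⟩ :=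
  hQ.weaken_right (Multiset.singleton_subset.mpr hmem)
    (hQ.one (Rule.impR R Γ 0 x A B fun _ => rfl) h hr) hr

theorem boxR (hQ : RuleClosed r Q) {x y : ℕ} {A : Formula} (hmem : (x, A.box) ∈ Δ)
    (hy : Fresh y ⟨R, Γ, Δ⟩) (h : Q ⟨insert (x, y) R, Γ, {(y, A)}⟩) (hr : r ⊆ R := by simp) :
    Q ⟨R, Γ, Δ⟩ := by
  have hΔ : {(x, A.box)} ⊆ Δ := Multiset.singleton_subset.mpr hmem
  have hy' : Fresh y ⟨R, Γ, {(x, A.box)}⟩ := hy.anti subset_rfl (Multiset.Subset.refl Γ) hΔ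
  exact hQ.weaken_right hΔ (hQ.one (Rule.boxR R Γ 0 x y A (fun _ => rfl) hy') h hr) hr

theorem diaL (hQ : RuleClosed r Q) {x y : ℕ} {A : Formula} (hmem : (x, A.dia) ∈ Γ)
    (hy : Fresh y ⟨R, Γ, Δ⟩) (h : Q ⟨insert (x, y) R, (y, A) ::ₘ Γ, Δ⟩)
    (hr : r ⊆ R := by simp) : Q ⟨R, Γ, Δ⟩ := by
  have hΓ : (x, A.dia) ::ₘ Γ ⊆ Γ := Multiset.cons_subset.mpr ⟨hmem, Multiset.Subset.refl Γ⟩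
  have hy' : Fresh y ⟨R, (x, A.dia) ::ₘ Γ, Δ⟩ := hy.anti subset_rfl hΓ (Multiset.Subset.refl Δ)
  exact hQ.weaken_left hΓ (hQ.one (Rule.diaL R Γ Δ x y A hy') h hr) hr

theorem boxL (hQ : RuleClosed r Q) {x y : ℕ} {A : Formula} (hmem : (x, A.box) ∈ Γ)
    (hxy : (x, y) ∈ R) (h : Q ⟨R, (y, A) ::ₘ Γ, Δ⟩) (hr : r ⊆ R := by simp) : Q ⟨R, Γ, Δ⟩ :=
  hQ.weaken_left (Multiset.cons_subset.mpr ⟨hmem, Multiset.Subset.refl Γ⟩)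
    (hQ.one (Rule.boxL R Γ Δ x y A hxy) h hr) hr

theorem diaR (hQ : RuleClosed r Q) {x y : ℕ} {A : Formula} (hmem : (x, A.dia) ∈ Δ)
    (hxy : (x, y) ∈ R) (h : Q ⟨R, Γ, (y, A) ::ₘ Δ⟩) (hr : r ⊆ R := by simp) : Q ⟨R, Γ, Δ⟩ :=
  hQ.weaken_right (Multiset.cons_subset.mpr ⟨hmem, Multiset.Subset.refl Δ⟩)
    (hQ.one (Rule.diaR R Γ Δ x y A hxy) h hr) hr

theorem transGen (hQ : RuleClosed r Q) {x z : ℕ}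
    (hxz : Relation.TransGen (fun a b => (a, b) ∈ R) x z) (h : Q ⟨insert (x, z) R, Γ, Δ⟩)
    (hr : r ⊆ R := by simp) : Q ⟨R, Γ, Δ⟩ := by
  induction hxz with
  | single hxz => rwa [Set.insert_eq_of_mem hxz] at h
  | @tail y z _ hyz ih =>
    refine ih (hQ.one (Rule.trans _ Γ Δ x y z rfl (Set.mem_insert _ _)
      (Set.mem_insert_of_mem _ hyz)) (hQ.thin ?_ h ?_) ?_)
    · exact Set.insert_subset_insert (Set.subset_insert _ _)
    · exact hr.trans (Set.subset_insert _ _)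
    · exact hr.trans (Set.subset_insert _ _)

end RuleClosed

/-! ### Provable sequents -/

section

variable {R : Set (ℕ × ℕ)} {Γ Δ : Multiset LFormula}

theorem provable_identity (A : Formula) (x : ℕ) (R : Set (ℕ × ℕ)) :
    Provable ⟨R, {(x, A)}, {(x, A)}⟩ := by
  have hQ := ruleClosed_provable
  have fresh_succ : ∀ x A, Fresh (x + 1) ⟨∅, {(x, A)}, {(x, A)}⟩ := fun x A => by
    simp [Fresh, Sequent.vars, relVars, mLabels]
  induction A generalizing x R with
  | atom p => exact InfProof.step [] (Rule.id R x p) (by simp)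
  | bot => exact InfProof.step [] (Rule.botL R 0 _ x) (by simp)
  | and A B ihA ihB =>
    exact hQ.two (Rule.andR R _ 0 x A B) (hQ.one (Rule.andL₁ R 0 _ x A B) (ihA x R))
      (hQ.one (Rule.andL₂ R 0 _ x A B) (ihB x R))
  | or A B ihA ihB =>
    exact hQ.two (Rule.orL R 0 _ x A B) (hQ.one (Rule.orR₁ R _ 0 x A B) (ihA x R))
      (hQ.one (Rule.orR₂ R _ 0 x A B) (ihB x R))
  | imp A B ihA ihB =>
    refine hQ.impR (Multiset.mem_singleton_self _) ?_
    exact hQ.impL (Multiset.mem_cons_of_mem (Multiset.mem_singleton_self _))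
      (hQ.weaken (by simp) (by simp) (ihA x R)) (hQ.weaken (by simp) (by simp) (ihB x R))
  | box A ihA =>
    refine hQ.thin (Set.empty_subset R) ?_
    refine hQ.boxR (Multiset.mem_singleton_self _) (fresh_succ x A.box) ?_
    refine hQ.boxL (Multiset.mem_singleton_self _) (Set.mem_insert _ _) ?_
    exact hQ.weaken (by simp) (by simp) (ihA (x + 1) _)
  | dia A ihA =>
    refine hQ.thin (Set.empty_subset R) ?_
    refine hQ.diaL (Multiset.mem_singleton_self _) (fresh_succ x A.dia) ?_
    refine hQ.diaR (Multiset.mem_singleton_self _) (Set.mem_insert _ _) ?_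
    exact hQ.weaken (by simp) (by simp) (ihA (x + 1) _)

theorem provable_of_mem_left_of_mem_right {x : ℕ} {A : Formula} (hΓ : (x, A) ∈ Γ)
    (hΔ : (x, A) ∈ Δ) : Provable ⟨R, Γ, Δ⟩ :=
  ruleClosed_provable.weaken (Multiset.singleton_subset.mpr hΓ) (Multiset.singleton_subset.mpr hΔ)
    (provable_identity A x R)

theorem provable_of_bot_left {x : ℕ} (h : (x, .bot) ∈ Γ) : Provable ⟨R, Γ, Δ⟩ := by
  obtain ⟨Γ, rfl⟩ := Multiset.exists_cons_of_mem h
  exact InfProof.step [] (Rule.botL R Γ Δ x) (by simp)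

theorem provable_of_and_left_of_fst_right {x : ℕ} {A B : Formula} (h : (x, A.and B) ∈ Γ)
    (hA : (x, A) ∈ Δ) : Provable ⟨R, Γ, Δ⟩ :=
  ruleClosed_provable.weaken_left (Multiset.singleton_subset.mpr h)
    (ruleClosed_provable.one (Rule.andL₁ R 0 Δ x A B)
      (provable_of_mem_left_of_mem_right (by simp) hA))

theorem provable_of_and_left_of_snd_right {x : ℕ} {A B : Formula} (h : (x, A.and B) ∈ Γ)
    (hB : (x, B) ∈ Δ) : Provable ⟨R, Γ, Δ⟩ :=
  ruleClosed_provable.weaken_left (Multiset.singleton_subset.mpr h)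
    (ruleClosed_provable.one (Rule.andL₂ R 0 Δ x A B)
      (provable_of_mem_left_of_mem_right (by simp) hB))

theorem provable_of_and_right {x : ℕ} {A B : Formula} (h : (x, A.and B) ∈ Δ) (hA : (x, A) ∈ Γ)
    (hB : (x, B) ∈ Γ) : Provable ⟨R, Γ, Δ⟩ :=
  ruleClosed_provable.weaken_right (Multiset.singleton_subset.mpr h)
    (ruleClosed_provable.two (Rule.andR R Γ 0 x A B)
      (provable_of_mem_left_of_mem_right hA (by simp))
      (provable_of_mem_left_of_mem_right hB (by simp)))

theorem provable_of_or_left {x : ℕ} {A B : Formula} (h : (x, A.or B) ∈ Γ) (hA : (x, A) ∈ Δ)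
    (hB : (x, B) ∈ Δ) : Provable ⟨R, Γ, Δ⟩ :=
  ruleClosed_provable.weaken_left (Multiset.singleton_subset.mpr h)
    (ruleClosed_provable.two (Rule.orL R 0 Δ x A B)
      (provable_of_mem_left_of_mem_right (by simp) hA)
      (provable_of_mem_left_of_mem_right (by simp) hB))

theorem provable_of_or_right_of_fst_left {x : ℕ} {A B : Formula} (h : (x, A.or B) ∈ Δ)
    (hA : (x, A) ∈ Γ) : Provable ⟨R, Γ, Δ⟩ :=
  ruleClosed_provable.weaken_right (Multiset.singleton_subset.mpr h)
    (ruleClosed_provable.one (Rule.orR₁ R Γ 0 x A B)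
      (provable_of_mem_left_of_mem_right hA (by simp)))

theorem provable_of_or_right_of_snd_left {x : ℕ} {A B : Formula} (h : (x, A.or B) ∈ Δ)
    (hB : (x, B) ∈ Γ) : Provable ⟨R, Γ, Δ⟩ :=
  ruleClosed_provable.weaken_right (Multiset.singleton_subset.mpr h)
    (ruleClosed_provable.one (Rule.orR₂ R Γ 0 x A B)
      (provable_of_mem_left_of_mem_right hB (by simp)))

theorem provable_of_imp_left {x : ℕ} {A B : Formula} (h : (x, A.imp B) ∈ Γ) (hA : (x, A) ∈ Γ)
    (hB : (x, B) ∈ Δ) : Provable ⟨R, Γ, Δ⟩ :=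
  ruleClosed_provable.impL h (provable_of_mem_left_of_mem_right hA (by simp))
    (provable_of_mem_left_of_mem_right (by simp) hB)

theorem provable_of_box_left {x z : ℕ} {A : Formula} (h : (x, A.box) ∈ Γ)
    (hxz : Relation.TransGen (fun a b => (a, b) ∈ R) x z) (hA : (z, A) ∈ Δ) :
    Provable ⟨R, Γ, Δ⟩ :=
  ruleClosed_provable.transGen hxz (ruleClosed_provable.boxL h (Set.mem_insert _ _)
    (provable_of_mem_left_of_mem_right (by simp) hA))

theorem provable_of_dia_right {x z : ℕ} {A : Formula} (h : (x, A.dia) ∈ Δ)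
    (hxz : Relation.TransGen (fun a b => (a, b) ∈ R) x z) (hA : (z, A) ∈ Γ) :
    Provable ⟨R, Γ, Δ⟩ :=
  ruleClosed_provable.transGen hxz (ruleClosed_provable.diaR h (Set.mem_insert _ _)
    (provable_of_mem_left_of_mem_right hA (by simp)))

theorem provable_of_box_left_of_box_right {z x y : ℕ} {A : Formula} (hy : Fresh y ⟨R, Γ, Δ⟩)
    (hΓ : (z, A.box) ∈ Γ) (hzx : Relation.ReflTransGen (fun a b => (a, b) ∈ R) z x)
    (hΔ : (x, A.box) ∈ Δ) : Provable ⟨R, Γ, Δ⟩ := by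
  refine ruleClosed_provable.boxR hΔ hy (provable_of_box_left hΓ ?_ (Multiset.mem_singleton_self _))
  exact Relation.TransGen.tail' (Relation.ReflTransGen.mono
    (fun _ _ h => Set.mem_insert_of_mem _ h) _ _ hzx) (Set.mem_insert _ _)

/-- The relational atoms above the `n`-th round of the ∞-proof of Löb's axiom at `x`: the chain
`x, x + 1, …, x + n` together with the atoms from `x` to each of its later members. -/
def lobChain (x : ℕ) : ℕ → Set (ℕ × ℕ)
  | 0 => ∅
  | n + 1 => insert (x, x + n + 1) (insert (x + n, x + n + 1) (lobChain x n))

theorem le_of_mem_lobChain {x n : ℕ} {a : ℕ × ℕ} (ha : a ∈ lobChain x n) :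
    a.1 ≤ x + n ∧ a.2 ≤ x + n := by
  induction n with
  | zero => exact ha.elim
  | succ n ih =>
    rcases ha with rfl | rfl | ha <;> grind

theorem fresh_lobChain {x n : ℕ} {A B : Formula} :
    Fresh (x + n + 1) ⟨lobChain x n, {(x, A)}, {(x + n, B)}⟩ := by
  rintro ((⟨w, h | h⟩ | ⟨C, hC⟩) | ⟨C, hC⟩)
  · have := (le_of_mem_lobChain h).1
    omega
  · have := (le_of_mem_lobChain h).2
    omega
  · have := (Prod.mk.inj (Multiset.mem_singleton.mp hC)).1
    omega
  · have := (Prod.mk.inj (Multiset.mem_singleton.mp hC)).1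
    omega

theorem transGen_lobChain (x n : ℕ) :
    Relation.TransGen (fun a b => (a, b) ∈ insert (x + n, x + n + 1) (lobChain x n))
      x (x + n + 1) := by
  cases n with
  | zero => exact .single (Set.mem_insert _ _)
  | succ n =>
    exact Relation.TransGen.tail (b := x + (n + 1))
      (.single (Set.mem_insert_of_mem _ (Set.mem_insert _ _))) (Set.mem_insert _ _)

theorem lob_reducesTo_succ (x : ℕ) (B : Formula) (n : ℕ) (L : Sequent → Prop)
    (hL : L ⟨lobChain x (n + 1), {(x, (B.box.imp B).box)}, {(x + (n + 1), B.box)}⟩) :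
    ReducesTo (lobChain x n) L
      ⟨lobChain x n, {(x, (B.box.imp B).box)}, {(x + n, B.box)}⟩ := by
  have hQ := ruleClosed_reducesTo (lobChain x n) L
  have hr : lobChain x n ⊆ lobChain x (n + 1) :=
    (Set.subset_insert _ _).trans (Set.subset_insert _ _)
  refine hQ.boxR (Multiset.mem_singleton_self _) fresh_lobChain ?_
  refine hQ.transGen (transGen_lobChain x n) ?_
  refine hQ.boxL (Multiset.mem_singleton_self _) (Set.mem_insert _ _) ?_ hr
  refine hQ.impL (Multiset.mem_cons_self _ _) ?_ ?_ hr
  · exact hQ.weaken (by simp) (by simp [add_assoc]) (reducesTo_of_leaf hL) hr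
  · exact reducesTo_of_provable (provable_of_mem_left_of_mem_right
      (Multiset.mem_cons_self _ _) (Multiset.mem_singleton_self _))

-- Each round of the ∞-proof moves the goal `□B` one step further up an infinite chain of labels.
theorem provable_lob (x : ℕ) (B : Formula) (R : Set (ℕ × ℕ)) :
    Provable ⟨R, {(x, (B.box.imp B).box)}, {(x, B.box)}⟩ := by
  refine ruleClosed_provable.thin (Set.empty_subset R) ?_
  refine provable_of_macroSystem
    (fun n => ⟨lobChain x n, {(x, (B.box.imp B).box)}, {(x + n, B.box)}⟩)
    (fun n m => m = n + 1) 0 ?_ (fun n => lob_reducesTo_succ x B n _ ⟨n + 1, rfl, rfl⟩)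
    fun g g_zero g_succ => ?_
  · rintro n _ rfl
    exact (Set.subset_insert _ _).trans (Set.subset_insert _ _)
  · have g_eq : ∀ n, g n = n := fun n => by
      induction n with
      | zero => exact g_zero
      | succ n ih => rw [g_succ, ih]
    refine ⟨fun k => x + k, fun k => ⟨k + 1, ?_⟩⟩
    rw [g_eq]
    exact Or.inr (Or.inl rfl)

end

/-! ### Games with colours -/

/-- A game of infinite duration in which one player chooses moves and the opponent answers each of
them with a new position. A move may visit a colour, and the first player wins every play in which
some colour is visited infinitely often. -/
structure ColouredGame where
  Pos : Type
  Move : Type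
  Resp : Pos → Move → Pos → Prop
  colour : Pos → Move → Option ℕ
  Won : (ℕ → Pos) → Prop
  won_tail_iff : ∀ f, Won (fun n => f (n + 1)) ↔ Won f
  won_of_frequently : ∀ (f : ℕ → Pos) (m : ℕ → Move) (c : ℕ),
    (∀ n, Resp (f n) (m n) (f (n + 1))) → (∃ᶠ n in atTop, colour (f n) (m n) = some c) → Won f

/-- Bounds on how often each colour may still be visited, where `⊤` stands for no bound. -/
abbrev Annotation := ℕ → WithTop Ordinal.{0}

namespace Annotation

/-- The annotation `α'` lowers `α` without touching the unbounded colours. -/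
def Lowers (α α' : Annotation) : Prop :=
  ∀ c, α' c ≤ α c ∧ (α' c = ⊤ ↔ α c = ⊤)

/-- The annotation `α'` may follow `α` when the colour `v` is visited. -/
def Descends (v : Option ℕ) (α α' : Annotation) : Prop :=
  Lowers α α' ∧ ∀ c, v = some c → α c ≠ ⊤ → α' c < α c

theorem Lowers.refl (α : Annotation) : Lowers α α := fun _ => ⟨le_rfl, Iff.rfl⟩

theorem Lowers.trans {α β γ : Annotation} (h : Lowers α β) (h' : Lowers β γ) : Lowers α γ :=
  fun c => ⟨(h' c).1.trans (h c).1, (h' c).2.trans (h c).2⟩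

theorem Descends.update {v : Option ℕ} {α α' : Annotation} (h : Descends v α α') {c : ℕ}
    {a a' : Ordinal.{0}} (hle : a' ≤ a) (hlt : v = some c → a' < a) :
    Descends v (Function.update α c a) (Function.update α' c a') := by
  refine ⟨fun d => ?_, fun d hd => ?_⟩
  · obtain rfl | hdc := eq_or_ne d c
    · simpa using hle
    · simpa [hdc] using h.1 d
  · obtain rfl | hdc := eq_or_ne d c
    · simpa using hlt hd
    · simpa [hdc] using h.2 d hd

instance small_lowers (α : Annotation) : Small.{0} {α' // Lowers α α'} := by
  let bounds (c : ℕ) : Set (WithTop Ordinal.{0}) :=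
    insert ⊤ ((↑) '' Set.Iic ((α c).untopD 0))
  have mem_bounds (α' : {α' // Lowers α α'}) (c : ℕ) : α'.1 c ∈ bounds c := by
    obtain ⟨hle, htop⟩ := α'.2 c
    by_cases h' : α'.1 c = ⊤
    · exact h' ▸ Set.mem_insert _ _
    · obtain ⟨a, ha⟩ := WithTop.ne_top_iff_exists.1 (mt htop.2 h')
      obtain ⟨a', ha'⟩ := WithTop.ne_top_iff_exists.1 h'
      refine Set.mem_insert_of_mem _ ⟨a', ?_, ha'⟩
      rw [← ha, ← ha'] at hle
      simpa [← ha] using hle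
  refine small_of_injective (β := ∀ c, bounds c) (f := fun α' c => ⟨α'.1 c, mem_bounds α' c⟩) ?_
  intro α' β' h
  ext c : 2
  simpa using congrFun h c

end Annotation

namespace ColouredGame

open Annotation

variable {G : ColouredGame}

/-- A position together with an annotation. -/
def State (G : ColouredGame) : Type 1 := G.Pos × Annotation

/-- One round of the annotated game, in which the opponent also has to decrease the ordinal bound
of the visited colour. -/
def Step (G : ColouredGame) (s : G.State) (m : G.Move) (s' : G.State) : Prop :=
  G.Resp s.1 m s'.1 ∧ Descends (G.colour s.1 m) s.2 s'.2

/-- A strategy chooses a move from the states reached so far, the initial one excluded and the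
earliest one first. -/
def Strategy (G : ColouredGame) : Type 1 := List G.State → G.Move

/-- The move proposed at the start of the game. -/
def Strategy.move (σ : G.Strategy) : G.Move := σ []

/-- The strategy that remains once the opponent has answered with `s`. -/
def Strategy.after (σ : G.Strategy) (s : G.State) : G.Strategy := fun h => σ (s :: h)

/-- A play of the annotated game through the states `f`, with `g n` the strategy remaining after
`n` rounds. -/
def IsRun (f : ℕ → G.State) (g : ℕ → G.Strategy) : Prop :=
  ∀ n, G.Step (f n) (g n).move (f (n + 1)) ∧ g (n + 1) = (g n).after (f (n + 1))

/-- Every play from `s` in accordance with `σ` is won. -/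
def Strategy.Wins (σ : G.Strategy) (s : G.State) : Prop :=
  ∀ f g, IsRun f g → f 0 = s → g 0 = σ → G.Won (fun n => (f n).1)

/-- The first player has a winning strategy from `s`. -/
def Winning (s : G.State) : Prop := ∃ σ : G.Strategy, σ.Wins s

theorem won_of_won_add (f : ℕ → G.Pos) (N : ℕ) (h : G.Won (fun n => f (n + N))) : G.Won f := by
  induction N with
  | zero => exact h
  | succ N ih =>
    refine ih ((G.won_tail_iff _).1 ?_)
    simpa only [Nat.add_right_comm _ 1 N, Nat.add_assoc] using h

theorem Strategy.Wins.after {σ : G.Strategy} {s s' : G.State} (h : σ.Wins s)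
    (hs : G.Step s σ.move s') : (σ.after s').Wins s' := by
  intro f g hrun hf hg
  refine (G.won_tail_iff (fun n => (Nat.casesOn n s f : G.State).1)).2
    (h (fun n => Nat.casesOn n s f) (fun n => Nat.casesOn n σ g) ?_ rfl rfl)
  rintro (_ | n)
  · subst hf
    exact ⟨hs, hg⟩
  · exact hrun n

theorem winning_of_move {s : G.State} (m : G.Move) (h : ∀ s', G.Step s m s' → Winning s') :
    Winning s := by
  have reply (s' : G.State) : ∃ σ : G.Strategy, G.Step s m s' → σ.Wins s' := by
    by_cases hs' : G.Step s m s'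
    · exact (h s' hs').imp fun _ hσ _ => hσ
    · exact ⟨fun _ => m, fun hs => absurd hs hs'⟩
  choose σ hσ using reply
  let first : G.Strategy
    | [] => m
    | s' :: t => σ s' t
  refine ⟨first, fun f g hrun hf hg => (G.won_tail_iff _).1 ?_⟩
  have step : G.Step s first.move (f 1) := by simpa [hf, hg] using (hrun 0).1
  refine hσ (f 1) step (fun n => f (n + 1)) (fun n => g (n + 1)) (fun n => hrun (n + 1)) rfl ?_
  rw [(hrun 0).2, hg]
  rfl

/-- The state `s` with the bound of the colour `c` replaced by `a`. -/
def State.annotate (s : G.State) (c : ℕ) (a : Ordinal.{0}) : G.State :=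
  (s.1, Function.update s.2 c a)

theorem Step.annotate {s s' : G.State} {m : G.Move} (h : G.Step s m s') {c : ℕ}
    {a a' : Ordinal.{0}} (hle : a' ≤ a) (hlt : G.colour s.1 m = some c → a' < a) :
    G.Step (s.annotate c a) m (s'.annotate c a') :=
  ⟨h.1, h.2.update hle hlt⟩

open Classical in
/-- Play `σ` as if the colour `c` had the bound `a`, and change over to `fresh` each time `c` is
visited. The first argument is the current state. -/
noncomputable def restart (c : ℕ) (a : Ordinal.{0}) (fresh : G.State → G.Strategy) :
    G.State → G.Strategy → G.Strategy
  | _, σ, [] => σ.move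
  | s, σ, s' :: t => restart c a fresh s'
      (if G.colour s.1 σ.move = some c then fresh s' else σ.after (s'.annotate c a)) t

/-- All ordinal bounds on `c` lead to a win from `s`. -/
def WinningForAll (c : ℕ) (s : G.State) : Prop := ∀ a, Winning (s.annotate c a)

/- There is only a set of states with annotations below `α`, so the bounds that witness the failure
of `WinningForAll` at these states have an upper bound. -/
theorem exists_uniform_bound (c : ℕ) (α : Annotation) :
    ∃ B, ∀ s : G.State, Lowers α s.2 → (∀ a < B, Winning (s.annotate c a)) →
      WinningForAll c s := by
  have witness (s : G.State) : ∃ a, Winning (s.annotate c a) → WinningForAll c s := by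
    by_contra! h
    exact (h 0).2 fun a => (h a).1
  choose b hb using witness
  obtain ⟨B, hB⟩ := Ordinal.bddAbove_of_small
    (s := Set.range fun q : G.Pos × {α' // Lowers α α'} => b (q.1, q.2.1))
  exact ⟨Order.succ B, fun s hs h =>
    hb s (h _ (Order.lt_succ_of_le (hB ⟨(s.1, ⟨s.2, hs⟩), rfl⟩)))⟩

section Restart

variable {c : ℕ} {a : Ordinal.{0}} {fresh : G.State → G.Strategy} {f : ℕ → G.State}
  {g : ℕ → G.Strategy}

open Classical in
theorem IsRun.exists_simulation (hrun : IsRun f g) {σ : G.Strategy}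
    (hg : g 0 = restart c a fresh (f 0) σ) :
    ∃ k : ℕ → G.Strategy, k 0 = σ ∧ (∀ n, (g n).move = (k n).move) ∧
      ∀ n, k (n + 1) = if G.colour (f n).1 (k n).move = some c then fresh (f (n + 1))
        else (k n).after ((f (n + 1)).annotate c a) := by
  let k (n : ℕ) : G.Strategy := Nat.rec σ (fun n τ => if G.colour (f n).1 τ.move = some c
    then fresh (f (n + 1)) else τ.after ((f (n + 1)).annotate c a)) n
  have hgk (n : ℕ) : g n = restart c a fresh (f n) (k n) := by
    induction n with
    | zero => exact hg
    | succ n ih => rw [(hrun n).2, ih]; rfl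
  exact ⟨k, rfl, fun n => by rw [hgk n]; rfl, fun _ => rfl⟩

theorem IsRun.wins_simulation (hrun : IsRun f g) {k : ℕ → G.Strategy} {B : Ordinal.{0}}
    (hfresh : ∀ s, WinningForAll c s → (fresh s).Wins (s.annotate c B))
    (hB : ∀ s : G.State, Lowers (f 0).2 s.2 → (∀ a < B, Winning (s.annotate c a)) →
      WinningForAll c s)
    (hk : (k 0).Wins ((f 0).annotate c B)) (hmove : ∀ n, (g n).move = (k n).move)
    (hvisit : ∀ n, G.colour (f n).1 (k n).move = some c → k (n + 1) = fresh (f (n + 1)))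
    (hskip : ∀ n, G.colour (f n).1 (k n).move ≠ some c →
      k (n + 1) = (k n).after ((f (n + 1)).annotate c B)) (n : ℕ) :
    (k n).Wins ((f n).annotate c B) := by
  have lowers (n : ℕ) : Lowers (f 0).2 (f n).2 := by
    induction n with
    | zero => exact Lowers.refl _
    | succ n ih => exact ih.trans (hrun n).1.2.1
  induction n with
  | zero => exact hk
  | succ n ih =>
    have step := (hrun n).1
    rw [hmove] at step
    by_cases hc : G.colour (f n).1 (k n).move = some c
    · rw [hvisit n hc]
      exact hfresh _ (hB _ (lowers _) fun a ha => ⟨_, ih.after (step.annotate ha.le fun _ => ha)⟩)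
    · rw [hskip n hc]
      exact ih.after (step.annotate le_rfl fun h => absurd h hc)

end Restart

/- If the strategies for the bound `B` are restarted infinitely often, the play is won because `c`
is visited infinitely often; otherwise the play is eventually consistent with one of them. -/
theorem winning_of_winningForAll {s : G.State} {c : ℕ} (h : WinningForAll c s) : Winning s := by
  obtain ⟨B, hB⟩ := exists_uniform_bound (G := G) c s.2
  have exists_fresh (s : G.State) :
      ∃ σ : G.Strategy, WinningForAll c s → σ.Wins (s.annotate c B) := by
    by_cases hs : WinningForAll c s
    · exact (hs B).imp fun _ hσ _ => hσ
    · obtain ⟨σ, -⟩ := h 0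
      exact ⟨σ, fun hs' => absurd hs' hs⟩
  choose fresh hfresh using exists_fresh
  refine ⟨restart c B fresh s (fresh s), fun f g hrun hf hg => ?_⟩
  subst hf
  obtain ⟨k, hk, hmove, hsucc⟩ := hrun.exists_simulation hg
  have step (n : ℕ) := (hrun n).1
  simp only [hmove] at step
  have wins := hrun.wins_simulation hfresh hB (hk ▸ hfresh _ h) hmove
    (fun n hc => (hsucc n).trans (if_pos hc)) (fun n hc => (hsucc n).trans (if_neg hc))
  by_cases hfreq : ∃ᶠ n in atTop, G.colour (f n).1 (k n).move = some c
  · exact G.won_of_frequently _ _ c (fun n => (step n).1) hfreq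
  · obtain ⟨N, hN⟩ := eventually_atTop.1 (not_frequently.1 hfreq)
    refine won_of_won_add _ N (wins N (fun n => (f (n + N)).annotate c B) (fun n => k (n + N))
      (fun n => ?_) (by simp) (by simp))
    have hc := hN (n + N) (Nat.le_add_left _ _)
    simp only [Nat.add_right_comm n 1 N]
    exact ⟨(step _).annotate le_rfl fun h => absurd h hc, (hsucc _).trans (if_neg hc)⟩

/-- The first player cannot win from `s`, and exactly the first `k` colours are bounded. -/
structure Refuted (k : ℕ) (s : G.State) : Prop where
  not_winning : ¬ Winning s
  top_iff : ∀ c, s.2 c = ⊤ ↔ k ≤ c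

theorem Refuted.exists_step {k : ℕ} {s : G.State} (h : Refuted k s) (m : G.Move) :
    ∃ a s', G.Step (s.annotate k a) m s' ∧ Refuted (k + 1) s' := by
  obtain ⟨a, ha⟩ : ∃ a, ¬ Winning (s.annotate k a) := by
    by_contra! hwin
    exact h.not_winning (winning_of_winningForAll hwin)
  obtain ⟨s', hs', hwin⟩ : ∃ s', G.Step (s.annotate k a) m s' ∧ ¬ Winning s' := by
    by_contra! hwin
    exact ha (winning_of_move m hwin)
  refine ⟨a, s', hs', hwin, fun c => (hs'.2.1 c).2.trans ?_⟩
  obtain rfl | hc := eq_or_ne c k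
  · simp [State.annotate]
  · simp only [State.annotate, Function.update_of_ne hc, h.top_iff]
    grind

/-- Answers to all sequences of moves, latest move first, along which the annotation bounds the
`k`-th colour from round `k` on. -/
structure Refutation (G : ColouredGame) (p : G.Pos) where
  state : List G.Move → G.State
  state_nil : (state []).1 = p
  refuted : ∀ ms, Refuted ms.length (state ms)
  step : ∀ m ms, ∃ a, G.Step ((state ms).annotate ms.length a) m (state (m :: ms))

theorem exists_refutation {p : G.Pos} (h : ¬ Winning (G := G) (p, ⊤)) :
    Nonempty (Refutation G p) := by
  have exists_next (k : ℕ) (s : G.State) (m : G.Move) : ∃ s', Refuted k s →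
      Refuted (k + 1) s' ∧ ∃ a, G.Step (s.annotate k a) m s' := by
    by_cases hs : Refuted k s
    · obtain ⟨a, s', hstep, hs'⟩ := hs.exists_step m
      exact ⟨s', fun _ => ⟨hs', a, hstep⟩⟩
    · exact ⟨s, fun hs' => absurd hs' hs⟩
  choose next hnext using exists_next
  let state (ms : List G.Move) : G.State :=
    List.rec (p, ⊤) (fun m ms s => next ms.length s m) ms
  have refuted (ms : List G.Move) : Refuted ms.length (state ms) := by
    induction ms with
    | nil => exact ⟨h, by simp [state]⟩
    | cons m ms ih => exact (hnext _ _ m ih).1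
  exact ⟨state, rfl, refuted, fun m ms => (hnext _ _ m (refuted ms)).2⟩

theorem Refutation.eventually_colour_ne {p : G.Pos} (ρ : Refutation G p)
    {h : ℕ → List G.Move} {m : ℕ → G.Move} (hm : ∀ n, h (n + 1) = m n :: h n) (c : ℕ) :
    ∀ᶠ n in atTop, G.colour (ρ.state (h n)).1 (m n) ≠ some c := by
  have length_le (n : ℕ) : n ≤ (h n).length := by
    induction n with
    | zero => exact Nat.zero_le _
    | succ n ih => simpa [hm] using ih
  have step (n : ℕ) : ∃ a, G.Step ((ρ.state (h n)).annotate (h n).length a) (m n)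
      (ρ.state (h (n + 1))) := hm n ▸ ρ.step (m n) (h n)
  have antitone : Antitone fun n => (ρ.state (h n)).2 c := by
    refine antitone_nat_of_succ_le fun n => ?_
    obtain ⟨a, ha⟩ := step n
    refine (ha.2.1 c).1.trans ?_
    obtain rfl | hc := eq_or_ne c (h n).length
    · simp [((ρ.refuted (h n)).top_iff _).2 le_rfl]
    · simp [State.annotate, hc]
  obtain ⟨N, hN⟩ := WellFoundedGT.monotone_chain_condition
    (α := (WithTop Ordinal.{0})ᵒᵈ) ⟨_, antitone.dual_right⟩
  filter_upwards [eventually_ge_atTop N, eventually_gt_atTop c] with n hn hcn hcolour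
  obtain ⟨a, ha⟩ := step n
  have hne : c ≠ (h n).length := (hcn.trans_le (length_le n)).ne
  have hlt := ha.2.2 c hcolour
  simp only [State.annotate, Function.update_of_ne hne, ne_eq, (ρ.refuted _).top_iff] at hlt
  refine (hlt (hcn.trans_le (length_le n)).not_ge).ne ?_
  exact (hN _ (hn.trans n.le_succ)).symm.trans (hN n hn)

end ColouredGame

/-! ### Positions of the proof search game -/

/-- The set of subformulas of a formula, itself included. -/
def subformulas : Formula → Set Formula
  | .atom n => {.atom n}
  | .bot => {.bot}
  | .and A B => insert (.and A B) (subformulas A ∪ subformulas B)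
  | .or A B => insert (.or A B) (subformulas A ∪ subformulas B)
  | .imp A B => insert (.imp A B) (subformulas A ∪ subformulas B)
  | .box A => insert (.box A) (subformulas A)
  | .dia A => insert (.dia A) (subformulas A)

theorem self_mem_subformulas (A : Formula) : A ∈ subformulas A := by
  cases A <;> simp [subformulas]

theorem finite_subformulas (A : Formula) : (subformulas A).Finite := by
  induction A with
  | atom | bot => exact Set.finite_singleton _
  | and _ _ hA hB | or _ _ hA hB | imp _ _ hA hB => exact (hA.union hB).insert _
  | box _ hA | dia _ hA => exact hA.insert _

theorem mem_subformulas_trans {A B F : Formula} (hB : B ∈ subformulas F)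
    (hA : A ∈ subformulas B) : A ∈ subformulas F := by
  induction F with
  | atom | bot => cases hB; exact hA
  | and C D ihC ihD | or C D ihC ihD | imp C D ihC ihD =>
    rcases hB with rfl | hB | hB
    · exact hA
    · exact Or.inr (Or.inl (ihC hB))
    · exact Or.inr (Or.inr (ihD hB))
  | box C ihC | dia C ihC =>
    rcases hB with rfl | hB
    · exact hA
    · exact Or.inr (ihC hB)

theorem mem_subformulas_of_and {A B F : Formula} (h : A.and B ∈ subformulas F) :
    A ∈ subformulas F ∧ B ∈ subformulas F := by
  constructor <;> exact mem_subformulas_trans h (by simp [subformulas, self_mem_subformulas])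

theorem mem_subformulas_of_or {A B F : Formula} (h : A.or B ∈ subformulas F) :
    A ∈ subformulas F ∧ B ∈ subformulas F := by
  constructor <;> exact mem_subformulas_trans h (by simp [subformulas, self_mem_subformulas])

theorem mem_subformulas_of_imp {A B F : Formula} (h : A.imp B ∈ subformulas F) :
    A ∈ subformulas F ∧ B ∈ subformulas F := by
  constructor <;> exact mem_subformulas_trans h (by simp [subformulas, self_mem_subformulas])

theorem mem_subformulas_of_box {A F : Formula} (h : A.box ∈ subformulas F) :
    A ∈ subformulas F :=
  mem_subformulas_trans h (by simp [subformulas, self_mem_subformulas])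

theorem mem_subformulas_of_dia {A F : Formula} (h : A.dia ∈ subformulas F) :
    A ∈ subformulas F :=
  mem_subformulas_trans h (by simp [subformulas, self_mem_subformulas])

/-- A sequent on the labels below `next` with bookkeeping for the proof search. The labels that
`◇`-left creates stay in the component of their predecessor, whereas `□`-right opens a new
component; `marks a` collects the `A` for which `□`-right has been applied to `□A` on the way
to `a`. -/
structure Position extends Sequent where
  next : ℕ
  comp : ℕ → ℕ
  marks : ℕ → Set Formula

/-- Positions are ordered by growth; the succedents are not compared because the rules `→`-right
and `□`-right discard them. -/
instance Position.instPreorder : Preorder Position where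
  le p q := p.next ≤ q.next ∧ p.rel ⊆ q.rel ∧ p.left ⊆ q.left ∧
    ∀ a < p.next, q.comp a = p.comp a ∧ q.marks a = p.marks a
  le_refl _ := ⟨le_rfl, subset_rfl, fun _ h => h, fun _ _ => ⟨rfl, rfl⟩⟩
  le_trans _ _ _ h h' := ⟨h.1.trans h'.1, h.2.1.trans h'.2.1,
    fun _ ha => h'.2.2.1 (h.2.2.1 ha), fun a ha =>
    ⟨(h'.2.2.2 a (ha.trans_le h.1)).1.trans (h.2.2.2 a ha).1,
      (h'.2.2.2 a (ha.trans_le h.1)).2.trans (h.2.2.2 a ha).2⟩⟩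

namespace Position

theorem next_mono {p q : Position} (h : p ≤ q) : p.next ≤ q.next := h.1

theorem rel_mono {p q : Position} (h : p ≤ q) : p.rel ⊆ q.rel := h.2.1

theorem left_mono {p q : Position} (h : p ≤ q) : p.left ⊆ q.left := h.2.2.1

theorem comp_eq_of_le {p q : Position} (h : p ≤ q) {a : ℕ} (ha : a < p.next) :
    q.comp a = p.comp a :=
  (h.2.2.2 a ha).1

theorem marks_eq_of_le {p q : Position} (h : p ≤ q) {a : ℕ} (ha : a < p.next) :
    q.marks a = p.marks a :=
  (h.2.2.2 a ha).2

/-- The position from which `x : A` is to be proved. -/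
def initial (x : ℕ) (A : Formula) : Position where
  rel := ∅
  left := 0
  right := {(x, A)}
  next := x + 1
  comp := id
  marks _ := ∅

/-- Put `x : A` on the left. -/
def addLeft (p : Position) (x : ℕ) (A : Formula) : Position :=
  { p with left := (x, A) ::ₘ p.left }

/-- Replace the succedent by `Δ`. -/
def withRight (p : Position) (Δ : Multiset LFormula) : Position :=
  { p with right := Δ }

/-- Create a successor of `x` in the component `c` with marks `M`, and put `A` on the left at this
new label. -/
def addSuccessor (p : Position) (x : ℕ) (A : Formula) (c : ℕ) (M : Set Formula) : Position where
  rel := insert (x, p.next) p.rel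
  left := (p.next, A) ::ₘ p.left
  right := p.right
  next := p.next + 1
  comp := Function.update p.comp p.next c
  marks := Function.update p.marks p.next M

/-- Apply `◇`-left to `x : ◇A`. -/
def unfoldDia (p : Position) (x : ℕ) (A : Formula) : Position :=
  p.addSuccessor x A (p.comp x) (p.marks x)

/-- Apply `→`-right to `x : A → B`. -/
def unfoldImp (p : Position) (x : ℕ) (A B : Formula) : Position :=
  (p.addLeft x A).withRight {(x, B)}

/-- Apply `□`-right to `x : □A`, with `□A` as an additional assumption at the new label, as Löb's
axiom permits. -/
def unfoldBox (p : Position) (x : ℕ) (A : Formula) : Position :=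
  (p.addSuccessor x A.box p.next (insert A (p.marks x))).withRight {(p.next, A)}

theorem le_addLeft (p : Position) (x : ℕ) (A : Formula) : p ≤ p.addLeft x A :=
  ⟨le_rfl, subset_rfl, fun _ => Multiset.mem_cons_of_mem, fun _ _ => ⟨rfl, rfl⟩⟩

theorem le_withRight (p : Position) (Δ : Multiset LFormula) : p ≤ p.withRight Δ :=
  ⟨le_rfl, subset_rfl, fun _ h => h, fun _ _ => ⟨rfl, rfl⟩⟩

theorem le_addSuccessor (p : Position) (x : ℕ) (A : Formula) (c : ℕ) (M : Set Formula) :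
    p ≤ p.addSuccessor x A c M :=
  ⟨Nat.le_succ _, Set.subset_insert _ _, fun _ => Multiset.mem_cons_of_mem, fun _ ha =>
    ⟨Function.update_of_ne ha.ne _ _, Function.update_of_ne ha.ne _ _⟩⟩

end Position

/-- The properties of the positions in the search for a proof of `F`. The last one makes `□`-right
superfluous for marked formulas. -/
structure Invariant (F : Formula) (p : Position) : Prop where
  next_pos : 0 < p.next
  rel_lt : ∀ {a b}, (a, b) ∈ p.rel → a < b ∧ b < p.next
  marks_subset : ∀ {a b}, (a, b) ∈ p.rel → p.marks a ⊆ p.marks b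
  comp_eq : ∀ {a b}, (a, b) ∈ p.rel → p.marks a = p.marks b → p.comp b = p.comp a
  left : ∀ {x A}, (x, A) ∈ p.left → x < p.next ∧ A ∈ subformulas F
  right : ∀ {x A}, (x, A) ∈ p.right → x < p.next ∧ A ∈ subformulas F
  comp_le : ∀ a, p.comp a ≤ a
  box_mem_subformulas : ∀ {a A}, A ∈ p.marks a → A.box ∈ subformulas F
  exists_box_left : ∀ {a A}, A ∈ p.marks a →
    ∃ z, Relation.ReflTransGen (fun a b => (a, b) ∈ p.rel) z a ∧ (z, A.box) ∈ p.left

namespace Invariant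

variable {F : Formula} {p : Position}

theorem initial (x : ℕ) (F : Formula) : Invariant F (Position.initial x F) where
  next_pos := Nat.succ_pos x
  rel_lt h := h.elim
  marks_subset h := h.elim
  comp_eq h := h.elim
  left h := absurd h (Multiset.notMem_zero _)
  right h := by
    cases Multiset.mem_singleton.1 h
    exact ⟨Nat.lt_succ_self x, self_mem_subformulas F⟩
  comp_le _ := le_rfl
  box_mem_subformulas h := h.elim
  exists_box_left h := h.elim

theorem fresh_next (hp : Invariant F p) : Fresh p.next p.toSequent := by
  rintro ((⟨w, h | h⟩ | ⟨A, h⟩) | ⟨A, h⟩)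
  · exact ((hp.rel_lt h).1.trans (hp.rel_lt h).2).false
  · exact (hp.rel_lt h).2.false
  · exact (hp.left h).1.false
  · exact (hp.right h).1.false

theorem addLeft (hp : Invariant F p) {x : ℕ} {A : Formula} (hx : x < p.next)
    (hA : A ∈ subformulas F) : Invariant F (p.addLeft x A) where
  __ := hp
  left h := by
    rcases Multiset.mem_cons.1 h with h | h
    · cases h
      exact ⟨hx, hA⟩
    · exact hp.left h
  exists_box_left h :=
    let ⟨z, hz, hzA⟩ := hp.exists_box_left h
    ⟨z, hz, Multiset.mem_cons_of_mem hzA⟩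

theorem withRight (hp : Invariant F p) {Δ : Multiset LFormula}
    (hΔ : ∀ {x A}, (x, A) ∈ Δ → x < p.next ∧ A ∈ subformulas F) : Invariant F (p.withRight Δ) where
  __ := hp
  right := hΔ

theorem exists_box_left_addSuccessor (hp : Invariant F p) {x : ℕ} {A : Formula} {c : ℕ}
    {M : Set Formula} (hMA : ∀ B ∈ M, B ∈ p.marks x ∨ A = B.box) {a : ℕ} {B : Formula}
    (hB : B ∈ (p.addSuccessor x A c M).marks a) :
    ∃ z, Relation.ReflTransGen (fun a b => (a, b) ∈ (p.addSuccessor x A c M).rel) z a ∧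
      (z, B.box) ∈ (p.addSuccessor x A c M).left := by
  have old {a : ℕ} (hB : B ∈ p.marks a) :
      ∃ z, Relation.ReflTransGen (fun a b => (a, b) ∈ (p.addSuccessor x A c M).rel) z a ∧
        (z, B.box) ∈ (p.addSuccessor x A c M).left := by
    obtain ⟨z, hz, hzB⟩ := hp.exists_box_left hB
    exact ⟨z, Relation.ReflTransGen.mono (fun _ _ h => Set.mem_insert_of_mem _ h) _ _ hz,
      Multiset.mem_cons_of_mem hzB⟩
  obtain rfl | ha := eq_or_ne a p.next
  · simp only [Position.addSuccessor, Function.update_self] at hB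
    obtain hB | rfl := hMA B hB
    · obtain ⟨z, hz, hzB⟩ := old hB
      exact ⟨z, hz.tail (Set.mem_insert _ _), hzB⟩
    · exact ⟨p.next, .refl, Multiset.mem_cons_self _ _⟩
  · simp only [Position.addSuccessor, Function.update_of_ne ha] at hB
    exact old hB

theorem eq_or_lt_of_mem_insert_rel (hp : Invariant F p) {x a b : ℕ}
    (h : (a, b) ∈ insert (x, p.next) p.rel) :
    a = x ∧ b = p.next ∨ (a, b) ∈ p.rel ∧ a < b ∧ b < p.next := by
  rcases h with h | h
  · cases h
    exact .inl ⟨rfl, rfl⟩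
  · exact .inr ⟨h, hp.rel_lt h⟩

theorem addSuccessor (hp : Invariant F p) {x : ℕ} {A : Formula} {c : ℕ} {M : Set Formula}
    (hx : x < p.next) (hA : A ∈ subformulas F) (hc : c ≤ p.next) (hM : p.marks x ⊆ M)
    (hMc : p.marks x = M → c = p.comp x) (hMA : ∀ B ∈ M, B ∈ p.marks x ∨ A = B.box) :
    Invariant F (p.addSuccessor x A c M) := by
  constructor <;> simp only [Position.addSuccessor]
  case next_pos => exact Nat.succ_pos _
  case rel_lt => intro a b h; have := hp.eq_or_lt_of_mem_insert_rel h; omega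
  case marks_subset =>
    intro a b h
    obtain ⟨rfl, rfl⟩ | ⟨h, hab, hb⟩ := hp.eq_or_lt_of_mem_insert_rel h
    · simpa [hx.ne] using hM
    · simpa [hb.ne, (hab.trans hb).ne] using hp.marks_subset h
  case comp_eq =>
    intro a b h
    obtain ⟨rfl, rfl⟩ | ⟨h, hab, hb⟩ := hp.eq_or_lt_of_mem_insert_rel h
    · simpa [hx.ne] using hMc
    · simpa [hb.ne, (hab.trans hb).ne] using hp.comp_eq h
  case left =>
    intro y B h
    rcases Multiset.mem_cons.1 h with h | h
    · cases h
      exact ⟨Nat.lt_succ_self _, hA⟩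
    · exact ⟨(hp.left h).1.trans (Nat.lt_succ_self _), (hp.left h).2⟩
  case right => exact fun h => ⟨(hp.right h).1.trans (Nat.lt_succ_self _), (hp.right h).2⟩
  case comp_le =>
    intro a
    obtain rfl | ha := eq_or_ne a p.next
    · simpa using hc
    · simpa [ha] using hp.comp_le a
  case box_mem_subformulas =>
    intro a B hB
    obtain rfl | ha := eq_or_ne a p.next
    · obtain h | rfl := hMA B (by simpa using hB)
      exacts [hp.box_mem_subformulas h, hA]
    · exact hp.box_mem_subformulas (by simpa [ha] using hB)
  case exists_box_left => exact hp.exists_box_left_addSuccessor (c := c) hMA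

theorem unfoldDia (hp : Invariant F p) {x : ℕ} {A : Formula} (h : (x, A.dia) ∈ p.left) :
    Invariant F (p.unfoldDia x A) :=
  hp.addSuccessor (hp.left h).1 (mem_subformulas_of_dia (hp.left h).2)
    ((hp.comp_le x).trans (hp.left h).1.le) subset_rfl (fun _ => rfl) (fun _ => .inl)

theorem unfoldImp (hp : Invariant F p) {x : ℕ} {A B : Formula} (h : (x, A.imp B) ∈ p.right) :
    Invariant F (p.unfoldImp x A B) := by
  obtain ⟨hx, hAB⟩ := hp.right h
  obtain ⟨hA, hB⟩ := mem_subformulas_of_imp hAB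
  refine (hp.addLeft hx hA).withRight fun h => ?_
  cases Multiset.mem_singleton.1 h
  exact ⟨hx, hB⟩

theorem unfoldBox (hp : Invariant F p) {x : ℕ} {A : Formula} (h : (x, A.box) ∈ p.right)
    (hA : A ∉ p.marks x) : Invariant F (p.unfoldBox x A) := by
  obtain ⟨hx, hbox⟩ := hp.right h
  have successor : Invariant F (p.addSuccessor x A.box p.next (insert A (p.marks x))) := by
    refine hp.addSuccessor hx hbox le_rfl (Set.subset_insert _ _) (fun h => ?_) ?_
    · exact absurd (h ▸ Set.mem_insert _ _) hA
    · rintro B (rfl | hB)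
      exacts [.inr rfl, .inl hB]
  refine successor.withRight fun h => ?_
  cases Multiset.mem_singleton.1 h
  exact ⟨Nat.lt_succ_self _, mem_subformulas_of_box hbox⟩

theorem transGen_lt (hp : Invariant F p) {a b : ℕ}
    (h : Relation.TransGen (fun a b => (a, b) ∈ p.rel) a b) : a < b ∧ b < p.next := by
  induction h with
  | single h => exact hp.rel_lt h
  | tail _ h ih => exact ⟨ih.1.trans (hp.rel_lt h).1, (hp.rel_lt h).2⟩

theorem transGen_marks_subset (hp : Invariant F p) {a b : ℕ}
    (h : Relation.TransGen (fun a b => (a, b) ∈ p.rel) a b) : p.marks a ⊆ p.marks b := by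
  induction h with
  | single h => exact hp.marks_subset h
  | tail _ h ih => exact ih.trans (hp.marks_subset h)

theorem transGen_comp_eq (hp : Invariant F p) {a b : ℕ}
    (h : Relation.TransGen (fun a b => (a, b) ∈ p.rel) a b) (heq : p.marks a = p.marks b) :
    p.comp b = p.comp a := by
  induction h with
  | single h => exact hp.comp_eq h heq
  | @tail b c hab hbc ih =>
    have hb := hp.transGen_marks_subset hab
    have hc := hp.marks_subset hbc
    rw [hp.comp_eq hbc (hc.antisymm (heq ▸ hb)), ih (hb.antisymm (heq ▸ hc))]

end Invariant

/-! ### The proof search game -/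

/-- The moves of the prover: cut on a formula, `◇`-left, `→`-right, `□`-right, and the claim that
the present sequent is provable. -/
inductive Move
  | cut (x : ℕ) (A : Formula)
  | dia (x : ℕ) (A : Formula)
  | imp (x : ℕ) (A B : Formula)
  | box (x : ℕ) (A : Formula)
  | close

/-- The moves that have an effect. A diamond is unfolded only if it has no witness, and a box only
if its formula is not marked. -/
def Legal (F : Formula) (p : Position) : Move → Prop
  | .cut x A => x < p.next ∧ A ∈ subformulas F
  | .dia x A => (x, A.dia) ∈ p.left ∧ ∀ y, (x, y) ∈ p.rel → (y, A) ∉ p.left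
  | .imp x A B => (x, A.imp B) ∈ p.right
  | .box x A => (x, A.box) ∈ p.right ∧ A ∉ p.marks x
  | .close => Provable p.toSequent

/-- The answers of the refuter to a move. No answer exists to a correct claim of provability, and
illegal moves leave the position unchanged. -/
inductive Answer (F : Formula) (p : Position) : Move → Position → Prop
  | cutRight {x A} : Legal F p (.cut x A) → Answer F p (.cut x A) (p.withRight ((x, A) ::ₘ p.right))
  | cutLeft {x A} : Legal F p (.cut x A) → Answer F p (.cut x A) (p.addLeft x A)
  | dia {x A} : Legal F p (.dia x A) → Answer F p (.dia x A) (p.unfoldDia x A)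
  | imp {x A B} : Legal F p (.imp x A B) → Answer F p (.imp x A B) (p.unfoldImp x A B)
  | box {x A} : Legal F p (.box x A) → Answer F p (.box x A) (p.unfoldBox x A)
  | illegal {m} : ¬ Legal F p m → Answer F p m p

open Classical in
/-- The colour visited by a legal `◇`-left move is the component in which it creates a label. -/
noncomputable def componentColour (F : Formula) (p : Position) : Move → Option ℕ
  | .dia x A => if Legal F p (.dia x A) then some (p.comp x) else none
  | _ => none

theorem componentColour_eq_some_iff {F : Formula} {p : Position} {m : Move} {c : ℕ} :
    componentColour F p m = some c ↔
      ∃ x A, m = .dia x A ∧ Legal F p (.dia x A) ∧ p.comp x = c := by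
  cases m <;> simp [componentColour]

theorem componentColour_dia {F : Formula} {p : Position} {x : ℕ} {A : Formula}
    (h : Legal F p (.dia x A)) :
    componentColour F p (.dia x A) = some ((p.unfoldDia x A).comp p.next) :=
  componentColour_eq_some_iff.2
    ⟨x, A, rfl, h, by simp [Position.unfoldDia, Position.addSuccessor]⟩

namespace Answer

variable {F : Formula} {p q : Position} {m : Move}

theorem invariant (h : Answer F p m q) (hp : Invariant F p) : Invariant F q := by
  cases h with
  | cutRight h =>
    refine hp.withRight fun hy => ?_
    rcases Multiset.mem_cons.1 hy with hy | hy
    · cases hy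
      exact h
    · exact hp.right hy
  | cutLeft h => exact hp.addLeft h.1 h.2
  | dia h => exact hp.unfoldDia h.1
  | imp h => exact hp.unfoldImp h
  | box h => exact hp.unfoldBox h.1 h.2
  | illegal => exact hp

theorem le (h : Answer F p m q) : p ≤ q := by
  cases h with
  | cutRight => exact p.le_withRight _
  | cutLeft => exact p.le_addLeft _ _
  | dia => exact p.le_addSuccessor _ _ _ _
  | imp => exact (p.le_addLeft _ _).trans (Position.le_withRight _ _)
  | box => exact (p.le_addSuccessor _ _ _ _).trans (Position.le_withRight _ _)
  | illegal => exact le_rfl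

theorem next_le_succ (h : Answer F p m q) : q.next ≤ p.next + 1 := by
  cases h with
  | cutRight | cutLeft | imp | illegal => exact Nat.le_succ _
  | dia | box => exact le_rfl

theorem eq_unfoldDia {x : ℕ} {A : Formula} (h : Answer F p (.dia x A) q)
    (hm : Legal F p (.dia x A)) : q = p.unfoldDia x A := by
  cases h with
  | dia => rfl
  | illegal h => exact absurd hm h

theorem eq_unfoldImp {x : ℕ} {A B : Formula} (h : Answer F p (.imp x A B) q)
    (hm : Legal F p (.imp x A B)) : q = p.unfoldImp x A B := by
  cases h with
  | imp => rfl
  | illegal h => exact absurd hm h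

theorem eq_unfoldBox {x : ℕ} {A : Formula} (h : Answer F p (.box x A) q)
    (hm : Legal F p (.box x A)) : q = p.unfoldBox x A := by
  cases h with
  | box => rfl
  | illegal h => exact absurd hm h

theorem componentColour_or_comp_of_next_lt (h : Answer F p m q) (hlt : p.next < q.next) :
    componentColour F p m = some (q.comp p.next) ∨ q.comp p.next = p.next := by
  cases h with
  | cutRight | cutLeft | imp | illegal => exact absurd hlt (lt_irrefl _)
  | dia h => exact .inl (componentColour_dia h)
  | box => exact .inr (by simp [Position.unfoldBox, Position.addSuccessor, Position.withRight])

end Answer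

/- A cut with `□(□A → A)` proves `□A` by Löb's axiom; the other premiss of the cut unfolds to the
position with the additional assumption `□A`. -/
theorem reducesTo_unfoldBox {F : Formula} {p : Position} (hp : Invariant F p) {x : ℕ} {A : Formula}
    (h : (x, A.box) ∈ p.right) {L : Sequent → Prop} (hL : L (p.unfoldBox x A).toSequent) :
    ReducesTo p.rel L p.toSequent := by
  have hQ := ruleClosed_reducesTo p.rel L
  have single : ReducesTo p.rel L ⟨p.rel, p.left, {(x, A.box)}⟩ := by
    refine hQ.cut x (A.box.imp A).box ?_ (reducesTo_of_provable ?_)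
    · refine hQ.boxR (y := p.next) (Multiset.mem_cons_self _ _) ?_ ?_
      · rintro ((hy | hy) | ⟨B, hy⟩)
        · exact hp.fresh_next (.inl (.inl hy))
        · exact hp.fresh_next (.inl (.inr hy))
        · have hx := (hp.right h).1
          simp only [Multiset.mem_cons, Multiset.mem_singleton, Prod.mk.injEq] at hy
          omega
      · exact hQ.impR (Multiset.mem_singleton_self _) (reducesTo_of_leaf hL)
    · exact ruleClosed_provable.weaken_left (by simp) (provable_lob x A p.rel)
  exact hQ.weaken_right (by simpa using h) single

theorem reducesTo_of_answer {F : Formula} {p : Position} (hp : Invariant F p) (m : Move)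
    {L : Sequent → Prop} (hL : ∀ q, Answer F p m q → L q.toSequent) :
    ReducesTo p.rel L p.toSequent := by
  have hQ := ruleClosed_reducesTo p.rel L
  by_cases hm : Legal F p m
  · cases m with
    | cut x A =>
      exact hQ.cut x A (reducesTo_of_leaf (hL _ (.cutRight hm)))
        (reducesTo_of_leaf (hL _ (.cutLeft hm)))
    | dia x A => exact hQ.diaL hm.1 hp.fresh_next (reducesTo_of_leaf (hL _ (.dia hm)))
    | imp x A B => exact hQ.impR hm (reducesTo_of_leaf (hL _ (.imp hm)))
    | box x A => exact reducesTo_unfoldBox hp hm.1 (hL _ (.box hm))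
    | close => exact reducesTo_of_provable hm
  · exact reducesTo_of_leaf (hL p (.illegal hm))

/-- An infinite play of the proof search game. -/
structure IsPlay (F : Formula) (p : ℕ → Position) (m : ℕ → Move) : Prop where
  invariant : ∀ n, Invariant F (p n)
  answer : ∀ n, Answer F (p n) (m n) (p (n + 1))

/-- During the play, `◇`-left creates the label `y` as a successor of `x` for the formula `A`. -/
def CreatesFor (F : Formula) (p : ℕ → Position) (m : ℕ → Move) (x : ℕ) (A : Formula) (y : ℕ) :
    Prop :=
  ∃ n, m n = .dia x A ∧ Legal F (p n) (.dia x A) ∧ (p n).next = y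

/-- During the play, `◇`-left creates the label `y` as a successor of `x`. -/
def Creates (F : Formula) (p : ℕ → Position) (m : ℕ → Move) (x y : ℕ) : Prop :=
  ∃ A, CreatesFor F p m x A y

theorem finite_reflTransGen_of_acc {α : Type*} {r : α → α → Prop} (hfin : ∀ x, {y | r x y}.Finite)
    {x : α} (hx : Acc (flip r) x) : {y | Relation.ReflTransGen r x y}.Finite := by
  induction hx with
  | intro x _ ih =>
    refine ((Set.finite_singleton x).union ((hfin x).biUnion ih)).subset fun z hz => ?_
    rcases hz.cases_head with rfl | ⟨y, hxy, hyz⟩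
    · exact .inl rfl
    · exact .inr (Set.mem_biUnion hxy hyz)

namespace IsPlay

variable {F : Formula} {p : ℕ → Position} {m : ℕ → Move}

theorem monotone (h : IsPlay F p m) : Monotone p :=
  monotone_nat_of_le_succ fun n => (h.answer n).le

theorem succ_eq_unfoldDia (h : IsPlay F p m) {n x : ℕ} {A : Formula} (hm : m n = .dia x A)
    (hl : Legal F (p n) (.dia x A)) : p (n + 1) = (p n).unfoldDia x A :=
  (hm ▸ h.answer n).eq_unfoldDia hl

theorem exists_next_eq (h : IsPlay F p m) {n y : ℕ} (h0 : (p 0).next ≤ y) (hn : y < (p n).next) :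
    ∃ k < n, (p k).next = y ∧ y < (p (k + 1)).next := by
  induction n with
  | zero => exact absurd hn h0.not_gt
  | succ n ih =>
    obtain hy | hy := lt_or_ge y (p n).next
    · obtain ⟨k, hk, hky⟩ := ih hy
      exact ⟨k, hk.trans n.lt_succ_self, hky⟩
    · have := (h.answer n).next_le_succ
      exact ⟨n, n.lt_succ_self, by omega, hn⟩

theorem eventually_mem_rel_of_creates (h : IsPlay F p m) {x y : ℕ} (hxy : Creates F p m x y) :
    ∀ᶠ n in atTop, (x, y) ∈ (p n).rel := by
  obtain ⟨A, k, hm, hl, rfl⟩ := hxy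
  filter_upwards [eventually_ge_atTop (k + 1)] with n hn
  refine Position.rel_mono (h.monotone hn) ?_
  rw [h.succ_eq_unfoldDia hm hl]
  exact Set.mem_insert _ _

theorem le_of_createsFor (h : IsPlay F p m) {n n' x : ℕ} {A : Formula} (hm : m n = .dia x A)
    (hl : Legal F (p n) (.dia x A)) (hl' : Legal F (p n') (.dia x A)) : n' ≤ n := by
  by_contra! hlt
  have hle := h.monotone (Nat.succ_le_of_lt hlt)
  rw [Nat.succ_eq_add_one, h.succ_eq_unfoldDia hm hl] at hle
  exact hl'.2 (p n).next (Position.rel_mono hle (Set.mem_insert _ _))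
    (Position.left_mono hle (Multiset.mem_cons_self _ _))

theorem finite_creates (h : IsPlay F p m) (x : ℕ) : {y | Creates F p m x y}.Finite := by
  have subsingleton (A : Formula) : {y | CreatesFor F p m x A y}.Subsingleton := by
    rintro y ⟨n, hm, hl, rfl⟩ z ⟨n', hm', hl', rfl⟩
    rw [(h.le_of_createsFor hm hl hl').antisymm (h.le_of_createsFor hm' hl' hl)]
  refine ((finite_subformulas F).biUnion fun A _ => (subsingleton A).finite).subset ?_
  rintro y ⟨A, hA⟩
  obtain ⟨n, -, hl, -⟩ := id hA
  exact Set.mem_biUnion (mem_subformulas_of_dia ((h.invariant n).left hl.1).2) hA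

theorem exists_reflTransGen_creates (h : IsPlay F p m) {n y : ℕ} (hy : y < (p n).next) :
    ∃ r, (r < (p 0).next ∨ r = (p n).comp y) ∧ Relation.ReflTransGen (Creates F p m) r y := by
  induction y using Nat.strong_induction_on generalizing n with
  | _ y ih =>
    obtain h0 | h0 := lt_or_ge y (p 0).next
    · exact ⟨y, .inl h0, .refl⟩
    obtain ⟨k, hk, rfl, hlt⟩ := h.exists_next_eq h0 hy
    rw [Position.comp_eq_of_le (h.monotone (Nat.succ_le_of_lt hk)) hlt]
    obtain hc | hc := (h.answer k).componentColour_or_comp_of_next_lt hlt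
    · obtain ⟨x, A, hm, hl, hx⟩ := componentColour_eq_some_iff.1 hc
      have hxk := ((h.invariant k).left hl.1).1
      obtain ⟨r, hr, hrx⟩ := ih x hxk hxk
      exact ⟨r, hx ▸ hr, hrx.tail ⟨A, k, hm, hl, rfl⟩⟩
    · exact ⟨_, .inr hc.symm, .refl⟩

theorem exists_large_label_of_frequently (h : IsPlay F p m) {c : ℕ}
    (hc : ∃ᶠ n in atTop, componentColour F (p n) (m n) = some c) (M : ℕ) :
    ∃ n y, M ≤ y ∧ y < (p n).next ∧ (p n).comp y = c := by
  have visit (N : ℕ) : ∃ n ≥ N, (p (n + 1)).next = (p n).next + 1 ∧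
      (p (n + 1)).comp (p n).next = c := by
    obtain ⟨n, hn, hcol⟩ := frequently_atTop.1 hc N
    obtain ⟨x, A, hm, hl, rfl⟩ := componentColour_eq_some_iff.1 hcol
    refine ⟨n, hn, ?_⟩
    simp [h.succ_eq_unfoldDia hm hl, Position.unfoldDia, Position.addSuccessor]
  have unbounded : ∃ n, M ≤ (p n).next := by
    induction M with
    | zero => exact ⟨0, Nat.zero_le _⟩
    | succ M ih =>
      obtain ⟨N, hN⟩ := ih
      obtain ⟨n, hn, hnext, -⟩ := visit N
      have := Position.next_mono (h.monotone hn)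
      exact ⟨n + 1, by omega⟩
  obtain ⟨N, hN⟩ := unbounded
  obtain ⟨n, hn, hnext, hcomp⟩ := visit N
  exact ⟨n + 1, (p n).next, hN.trans (Position.next_mono (h.monotone hn)), by omega, hcomp⟩

/- If there were no infinite path of created labels, the component `c` would be finite by König's
lemma, but each visit of `c` enlarges it. -/
theorem exists_path_of_frequently (h : IsPlay F p m) {c : ℕ}
    (hc : ∃ᶠ n in atTop, componentColour F (p n) (m n) = some c) :
    ∃ d : ℕ → ℕ, ∀ k, ∀ᶠ n in atTop, (d k, d (k + 1)) ∈ (p n).rel := by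
  obtain ⟨r, hr⟩ : ∃ r, ¬ Acc (flip (Creates F p m)) r := by
    by_contra! hacc
    have finite : (⋃ r ∈ Set.Iio (p 0).next ∪ {c},
        {y | Relation.ReflTransGen (Creates F p m) r y}).Finite :=
      ((Set.finite_Iio _).union (Set.finite_singleton c)).biUnion fun r _ =>
        finite_reflTransGen_of_acc h.finite_creates (hacc r)
    obtain ⟨M, hM⟩ := finite.bddAbove
    obtain ⟨n, y, hMy, hy, rfl⟩ := h.exists_large_label_of_frequently hc (M + 1)
    obtain ⟨r, hr, hry⟩ := h.exists_reflTransGen_creates hy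
    exact (hM (Set.mem_biUnion hr hry)).not_gt hMy
  obtain ⟨d, -, hd⟩ := not_acc_iff_exists_descending_chain.1 hr
  exact ⟨d, fun k => h.eventually_mem_rel_of_creates (hd k)⟩

end IsPlay

/-- The proof search game for `F`, which the prover wins if an infinite path of relational atoms
is produced. -/
noncomputable def searchGame (F : Formula) : ColouredGame where
  Pos := {p // Invariant F p}
  Move := Move
  Resp p m q := Answer F p.1 m q.1
  colour p m := componentColour F p.1 m
  Won f := ∃ d : ℕ → ℕ, ∀ k, ∀ᶠ n in atTop, (d k, d (k + 1)) ∈ (f n).1.rel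
  won_tail_iff f := exists_congr fun d => forall_congr' fun k => by
    conv_rhs => rw [← map_add_atTop_eq_nat 1]
    rfl
  won_of_frequently f m _ hresp hc :=
    IsPlay.exists_path_of_frequently (m := m) ⟨fun n => (f n).2, hresp⟩ hc

theorem provable_of_winning {F : Formula} {p : Position} (hp : Invariant F p)
    (h : ColouredGame.Winning (G := searchGame F) (⟨p, hp⟩, ⊤)) : Provable p.toSequent := by
  obtain ⟨σ, hσ⟩ := h
  let unbounded (q : (searchGame F).Pos) : (searchGame F).State := (q, ⊤)
  refine provable_of_macroSystem
    (T := (searchGame F).Pos × (searchGame F).Strategy) (fun s => s.1.1.toSequent)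
    (fun s t => Answer F s.1.1 s.2.move t.1.1 ∧ t.2 = s.2.after (unbounded t.1)) (⟨p, hp⟩, σ)
    (fun s t hst => Position.rel_mono hst.1.le) (fun s => ?_) (fun g hg0 hg => ?_)
  · exact reducesTo_of_answer s.1.2 s.2.move fun q hq =>
      ⟨(⟨q, hq.invariant s.1.2⟩, s.2.after (unbounded ⟨q, hq.invariant s.1.2⟩)), ⟨hq, rfl⟩, rfl⟩
  · obtain ⟨d, hd⟩ := hσ (fun n => unbounded (g n).1) (fun n => (g n).2)
      (fun n => ⟨⟨(hg n).1, Annotation.Lowers.refl _, fun _ _ h => absurd rfl h⟩, (hg n).2⟩)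
      (by rw [hg0]) (by rw [hg0])
    exact ⟨d, fun k => (hd k).exists⟩

/-! ### Saturated positions -/

/-- The labelled subformulas of `F` on which the position takes no side. -/
def undecided (F : Formula) (p : Position) : Set LFormula :=
  {a | (a.1 < p.next ∧ a.2 ∈ subformulas F) ∧ a ∉ p.left ∧ a ∉ p.right}

/-- The moves that bring the position closer to saturation: cuts on undecided formulas, and
`◇`-left. -/
def Useful (F : Formula) (p : Position) : Move → Prop
  | .cut x A => (x, A) ∈ undecided F p
  | .dia x A => Legal F p (.dia x A)
  | _ => False

/-- A position without useful moves: every labelled subformula of `F` is on one of the two sides,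
and every diamond on the left has a witness. -/
def Saturated (F : Formula) (p : Position) : Prop :=
  ∀ m, ¬ Useful F p m

namespace Saturated

variable {F : Formula} {p : Position}

theorem mem_left_or_mem_right (h : Saturated F p) {x : ℕ} {A : Formula} (hx : x < p.next)
    (hA : A ∈ subformulas F) : (x, A) ∈ p.left ∨ (x, A) ∈ p.right := by
  by_contra! hn
  exact h (.cut x A) ⟨⟨hx, hA⟩, hn⟩

theorem exists_witness (h : Saturated F p) {x : ℕ} {A : Formula} (hA : (x, A.dia) ∈ p.left) :
    ∃ y, (x, y) ∈ p.rel ∧ (y, A) ∈ p.left := by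
  by_contra! hn
  exact h (.dia x A) ⟨hA, hn⟩

end Saturated

theorem finite_undecided (F : Formula) (p : Position) : (undecided F p).Finite :=
  ((Set.finite_lt_nat p.next).prod (finite_subformulas F)).subset fun _ h => h.1

namespace Useful

variable {F : Formula} {p q : Position} {m : Move}

theorem right_subset (hm : Useful F p m) (h : Answer F p m q) : p.right ⊆ q.right := by
  cases h with
  | cutRight => exact Multiset.subset_cons _ _
  | cutLeft | dia | illegal => exact fun _ ha => ha
  | imp | box => exact hm.elim

theorem componentColour_of_next_lt (hm : Useful F p m) (h : Answer F p m q)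
    (hlt : p.next < q.next) : componentColour F p m = some (q.comp p.next) := by
  cases h with
  | cutRight | cutLeft | illegal => exact absurd hlt (lt_irrefl _)
  | dia h => exact componentColour_dia h
  | imp | box => exact hm.elim

theorem undecided_ssubset (hm : Useful F p m) (h : Answer F p m q)
    (hc : ∀ c, componentColour F p m ≠ some c) : undecided F q ⊂ undecided F p := by
  cases h with
  | cutRight =>
    refine ⟨fun a ⟨ha, hl, hr⟩ => ⟨ha, hl, fun h => hr (Multiset.mem_cons_of_mem h)⟩,
      fun hsub => ?_⟩
    exact (hsub hm).2.2 (Multiset.mem_cons_self _ _)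
  | cutLeft =>
    refine ⟨fun a ⟨ha, hl, hr⟩ => ⟨ha, fun h => hl (Multiset.mem_cons_of_mem h), hr⟩,
      fun hsub => ?_⟩
    exact (hsub hm).2.1 (Multiset.mem_cons_self _ _)
  | dia h => exact absurd (componentColour_eq_some_iff.2 ⟨_, _, rfl, h, rfl⟩) (hc _)
  | imp | box => exact hm.elim
  | illegal hl =>
    cases m with
    | cut => exact absurd hm.1 hl
    | dia => exact absurd hm hl
    | imp | box | close => exact hm.elim

end Useful

namespace IsPlay

variable {F : Formula} {p : ℕ → Position} {m : ℕ → Move}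

theorem comp_lt_of_useful (h : IsPlay F p m) (hu : ∀ n, Useful F (p n) (m n)) {n y : ℕ}
    (hy : y < (p n).next) : (p n).comp y < (p 0).next := by
  induction y using Nat.strong_induction_on generalizing n with
  | _ y ih =>
    obtain h0 | h0 := lt_or_ge y (p 0).next
    · exact ((h.invariant n).comp_le y).trans_lt h0
    obtain ⟨k, hk, rfl, hlt⟩ := h.exists_next_eq h0 hy
    rw [Position.comp_eq_of_le (h.monotone (Nat.succ_le_of_lt hk)) hlt]
    have hc := (hu k).componentColour_of_next_lt (h.answer k) hlt
    obtain ⟨x, A, -, hl, hx⟩ := componentColour_eq_some_iff.1 hc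
    have hxk := ((h.invariant k).left hl.1).1
    exact hx ▸ ih x hxk hxk

theorem not_forall_useful (h : IsPlay F p m)
    (hc : ∀ c, ∀ᶠ n in atTop, componentColour F (p n) (m n) ≠ some c) :
    ¬ ∀ n, Useful F (p n) (m n) := by
  intro hu
  obtain ⟨N, hN⟩ : ∃ N, ∀ n ≥ N, ∀ c < (p 0).next, componentColour F (p n) (m n) ≠ some c :=
    eventually_atTop.1 ((eventually_all_finite (Set.finite_lt_nat _)).2 fun c _ => hc c)
  have undecided_ssubset (n : ℕ) :
      undecided F (p (N + n + 1)) ⊂ undecided F (p (N + n)) := by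
    refine (hu _).undecided_ssubset (h.answer _) fun c hcol => ?_
    obtain ⟨x, A, -, hl, rfl⟩ := componentColour_eq_some_iff.1 hcol
    exact hN _ (N.le_add_right n) _ (h.comp_lt_of_useful hu ((h.invariant _).left hl.1).1) hcol
  obtain ⟨n, hn⟩ := WellFounded.not_rel_apply_succ (r := (· < ·))
    fun n => (undecided F (p (N + n))).ncard
  exact hn (Set.ncard_lt_ncard (undecided_ssubset n) (finite_undecided _ _))

/- A label in a component is created either by `◇`-left, which visits the component, or as its
first label, which gives the component its name. -/
theorem exists_label_bound (h : IsPlay F p m) {c : ℕ}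
    (hc : ∀ᶠ n in atTop, componentColour F (p n) (m n) ≠ some c) :
    ∃ M, ∀ n, ∀ y < (p n).next, (p n).comp y = c → y < M := by
  obtain ⟨N, hN⟩ := eventually_atTop.1 hc
  refine ⟨max (p N).next (c + 1), fun n y hy hyc => ?_⟩
  by_contra! hle
  obtain ⟨hNy, hcy⟩ := max_le_iff.1 hle
  obtain ⟨k, hk, rfl, hlt⟩ :=
    h.exists_next_eq ((Position.next_mono (h.monotone N.zero_le)).trans hNy) hy
  have hNk : N ≤ k := by
    by_contra! hkN
    exact (hlt.trans_le (Position.next_mono (h.monotone (Nat.succ_le_of_lt hkN)))).not_ge hNy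
  rw [Position.comp_eq_of_le (h.monotone (Nat.succ_le_of_lt hk)) hlt] at hyc
  obtain hcol | hcomp := (h.answer k).componentColour_or_comp_of_next_lt hlt
  · exact hN k hNk (hyc ▸ hcol)
  · exact (hcomp.symm.trans hyc).not_gt hcy

end IsPlay

/-! ### Strategies of the refuter -/

/-- A strategy of the refuter in the proof search game for `F`, as a function of the moves made so
far, latest move first, that visits no component infinitely often. -/
structure RefuterStrategy (F : Formula) where
  pos : List Move → Position
  invariant : ∀ ms, Invariant F (pos ms)
  answer : ∀ m ms, Answer F (pos ms) m (pos (m :: ms))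
  eventually_componentColour_ne : ∀ {h : ℕ → List Move} {m : ℕ → Move},
    (∀ n, h (n + 1) = m n :: h n) →
      ∀ c, ∀ᶠ n in atTop, componentColour F (pos (h n)) (m n) ≠ some c

theorem exists_refuterStrategy {x : ℕ} {F : Formula} (h : ¬ Provable ⟨∅, 0, {(x, F)}⟩) :
    ∃ S : RefuterStrategy F, S.pos [] = Position.initial x F := by
  obtain ⟨ρ⟩ := ColouredGame.exists_refutation (G := searchGame F)
    (p := ⟨Position.initial x F, Invariant.initial x F⟩)
    fun hw => h (provable_of_winning (Invariant.initial x F) hw)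
  refine ⟨⟨fun ms => (ρ.state ms).1.1, fun ms => (ρ.state ms).1.2, fun m ms => ?_,
    fun hm c => ρ.eventually_colour_ne hm c⟩, congrArg Subtype.val ρ.state_nil⟩
  obtain ⟨a, hstep⟩ := ρ.step m ms
  exact hstep.1

theorem exists_eq_cons_of_suffix {α : Type*} {l l' : List α} (h : l <:+ l')
    (hl : l'.length = l.length + 1) : ∃ a, l' = a :: l := by
  cases l' with
  | nil => cases hl
  | cons a t =>
    obtain rfl | h := List.suffix_cons_iff.1 h
    · simp at hl
    · exact ⟨a, by rw [h.eq_of_length (by simpa using hl.symm)]⟩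

theorem exists_thread {α : Type*} {f : ℕ → List α} (hf : ∀ n, f n <:+ f (n + 1))
    (hlen : ∀ k, ∃ n, k ≤ (f n).length) :
    ∃ (h : ℕ → List α) (a : ℕ → α), (∀ n, h (n + 1) = a n :: h n) ∧
      ∀ n, h (f n).length = f n := by
  have suffix_of_le {i j : ℕ} (hij : i ≤ j) : f i <:+ f j :=
    Nat.le_induction List.suffix_rfl (fun n _ h => h.trans (hf n)) j hij
  have suffix_of_length_le {l l' : List α} {i j : ℕ} (hl : l <:+ f i) (hl' : l' <:+ f j)
      (hle : l.length ≤ l'.length) : l <:+ l' :=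
    List.suffix_of_suffix_length_le (hl.trans (suffix_of_le (le_max_left i j)))
      (hl'.trans (suffix_of_le (le_max_right i j))) hle
  have exists_suffix (n : ℕ) : ∃ l i, l <:+ f i ∧ l.length = n := by
    obtain ⟨i, hi⟩ := hlen n
    exact ⟨_, i, List.drop_suffix ((f i).length - n) (f i), by rw [List.length_drop]; omega⟩
  choose h i hi hlength using exists_suffix
  have exists_cons (n : ℕ) : ∃ a, h (n + 1) = a :: h n :=
    exists_eq_cons_of_suffix (suffix_of_length_le (hi n) (hi (n + 1)) (by simp [hlength]))
      (by simp [hlength])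
  choose a ha using exists_cons
  refine ⟨h, a, ha, fun n => ?_⟩
  exact (suffix_of_length_le (hi _) List.suffix_rfl (hlength _).le).eq_of_length (hlength _)

namespace RefuterStrategy

variable {F : Formula} (S : RefuterStrategy F)

theorem not_provable (ms : List Move) : ¬ Provable (S.pos ms).toSequent := by
  have h := S.answer .close ms
  generalize S.pos (.close :: ms) = q at h
  cases h with
  | illegal h => exact h

theorem pos_mono {ms ms' : List Move} (h : ms <:+ ms') : S.pos ms ≤ S.pos ms' := by
  obtain ⟨t, rfl⟩ := h
  induction t with
  | nil => exact le_rfl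
  | cons m t ih => exact ih.trans (S.answer m _).le

theorem next_le (ms : List Move) : (S.pos ms).next ≤ (S.pos []).next + ms.length := by
  induction ms with
  | nil => exact le_rfl
  | cons m ms ih => exact (S.answer m ms).next_le_succ.trans (Nat.succ_le_succ ih)

theorem isPlay {h : ℕ → List Move} {m : ℕ → Move} (hm : ∀ n, h (n + 1) = m n :: h n) :
    IsPlay F (fun n => S.pos (h n)) m :=
  ⟨fun _ => S.invariant _, fun n => by simpa only [hm] using S.answer (m n) (h n)⟩

theorem exists_saturated (ms : List Move) :
    ∃ ms', ms <:+ ms' ∧ Saturated F (S.pos ms') ∧ (S.pos ms).right ⊆ (S.pos ms').right := by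
  by_contra! hn
  let Extension := {ms' // ms <:+ ms' ∧ (S.pos ms).right ⊆ (S.pos ms').right}
  have exists_useful (e : Extension) : ∃ m, Useful F (S.pos e.1) m := by
    by_contra! h
    exact hn e.1 e.2.1 h e.2.2
  choose move useful using exists_useful
  let extend (e : Extension) : Extension :=
    ⟨move e :: e.1, e.2.1.trans (List.suffix_cons _ _),
      fun _ ha => (useful e).right_subset (S.answer _ _) (e.2.2 ha)⟩
  let history (n : ℕ) : Extension := extend^[n] ⟨ms, List.suffix_rfl, fun _ h => h⟩
  have history_succ (n : ℕ) : (history (n + 1)).1 = move (history n) :: (history n).1 := by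
    simp only [history, Function.iterate_succ_apply']
    rfl
  exact (S.isPlay history_succ).not_forall_useful (S.eventually_componentColour_ne history_succ)
    fun n => useful _

end RefuterStrategy

/-! ### The countermodel -/

theorem exists_forall_ge_eq_of_monotone {α : Type*} {s : Set α} (hs : s.Finite) {M : ℕ → Set α}
    (hM : Monotone M) (hMs : ∀ n, M n ⊆ s) : ∃ N, ∀ n ≥ N, M n = M N := by
  have : Finite (𝒫 s) := hs.powerset
  let chain : ℕ →o 𝒫 s := ⟨fun n => ⟨M n, hMs n⟩, hM⟩
  obtain ⟨N, hN⟩ := WellFoundedGT.monotone_chain_condition chain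
  exact ⟨N, fun n hn => (congrArg Subtype.val (hN n hn)).symm⟩

/-- A path of labels `g n` along growing positions, each label being reachable from its
predecessor. -/
structure IsAscendingPath (F : Formula) (p : ℕ → Position) (g : ℕ → ℕ) : Prop where
  invariant : ∀ n, Invariant F (p n)
  le_succ : ∀ n, p n ≤ p (n + 1)
  lt_next : ∀ n, g n < (p n).next
  transGen : ∀ n, Relation.TransGen (fun a b => (a, b) ∈ (p (n + 1)).rel) (g n) (g (n + 1))

namespace IsAscendingPath

variable {F : Formula} {p : ℕ → Position} {g : ℕ → ℕ}

theorem strictMono (h : IsAscendingPath F p g) : StrictMono g :=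
  strictMono_nat_of_lt_succ fun n => ((h.invariant (n + 1)).transGen_lt (h.transGen n)).1

theorem monotone_marks (h : IsAscendingPath F p g) : Monotone fun n => (p n).marks (g n) :=
  monotone_nat_of_le_succ fun n => by
    simpa only [Position.marks_eq_of_le (h.le_succ n) (h.lt_next n)] using
      (h.invariant (n + 1)).transGen_marks_subset (h.transGen n)

theorem exists_forall_ge_comp_eq (h : IsAscendingPath F p g) :
    ∃ c N, ∀ n ≥ N, (p n).comp (g n) = c := by
  obtain ⟨N, hN⟩ := exists_forall_ge_eq_of_monotone (finite_subformulas F) h.monotone_marks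
    fun n _ hA => mem_subformulas_of_box ((h.invariant n).box_mem_subformulas hA)
  refine ⟨(p N).comp (g N), N, fun n hn => ?_⟩
  induction n, hn using Nat.le_induction with
  | base => rfl
  | succ n hn ih =>
    rw [← ih, ← Position.comp_eq_of_le (h.le_succ n) (h.lt_next n)]
    refine (h.invariant (n + 1)).transGen_comp_eq (h.transGen n) ?_
    rw [Position.marks_eq_of_le (h.le_succ n) (h.lt_next n), hN n hn,
      hN (n + 1) (hn.trans n.le_succ)]

end IsAscendingPath

namespace RefuterStrategy

variable {F : Formula} (S : RefuterStrategy F)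

-- The path eventually stays in one component, whose labels are bounded.
theorem not_isAscendingPath {f : ℕ → List Move} (hf : ∀ n, f n <:+ f (n + 1)) (g : ℕ → ℕ) :
    ¬ IsAscendingPath F (fun n => S.pos (f n)) g := by
  intro hg
  have exists_length_ge (k : ℕ) : ∃ n, k ≤ (f n).length := by
    refine ⟨(S.pos []).next + k, ?_⟩
    have := hg.strictMono.le_apply (x := (S.pos []).next + k)
    have := hg.lt_next ((S.pos []).next + k)
    have := S.next_le (f ((S.pos []).next + k))
    omega
  obtain ⟨h, m, hm, hhf⟩ := exists_thread hf exists_length_ge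
  obtain ⟨c, N, hN⟩ := hg.exists_forall_ge_comp_eq
  obtain ⟨M, hM⟩ := (S.isPlay hm).exists_label_bound (S.eventually_componentColour_ne hm c)
  have bound (n : ℕ) (hn : N ≤ n) : g n < M :=
    hM (f n).length (g n) (by simpa only [hhf] using hg.lt_next n)
      (by simpa only [hhf] using hN n hn)
  exact (bound (max N M) (le_max_left N M)).not_ge
    ((le_max_right N M).trans hg.strictMono.le_apply)

/-- The histories of moves to which the strategy answers with a saturated position. -/
def World : Type := {ms : List Move // Saturated F (S.pos ms)}

/-- The position that the strategy assigns to a world. -/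
def worldPos (w : S.World) : Position := S.pos w.1

/-- The countermodel extracted from a strategy of the refuter: its worlds are ordered by extension
of histories, and the left-hand sides of the positions tell which atoms are true. -/
def model : Kripke S.World ℕ where
  le w w' := w.1 <:+ w'.1
  le_refl _ := List.suffix_rfl
  le_trans _ _ _ h h' := h.trans h'
  le_antisymm _ _ h h' := Subtype.ext (h.eq_of_length (h.length_le.antisymm h'.length_le))
  Dom w := {d | d < (S.worldPos w).next}
  Dom_ne w := ⟨0, (S.invariant w.1).next_pos⟩
  Dom_mono _ _ h _ hd := hd.trans_le (Position.next_mono (S.pos_mono h))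
  Pr w n := {d | (d, Formula.atom n) ∈ (S.worldPos w).left}
  Pr_sub w _ _ hd := ((S.invariant w.1).left hd).1
  Pr_mono _ _ _ h _ hd := Position.left_mono (S.pos_mono h) hd
  Rel w := Relation.TransGen fun a b => (a, b) ∈ (S.worldPos w).rel
  Rel_dom w _ _ h :=
    have hlt := (S.invariant w.1).transGen_lt h
    ⟨hlt.1.trans hlt.2, hlt.2⟩
  Rel_mono _ _ d e h :=
    Relation.TransGen.mono (fun _ _ h' => Position.rel_mono (S.pos_mono h) h') d e

theorem predIGL_model : PredIGL S.model := by
  refine ⟨fun w _ _ _ h h' => Relation.TransGen.trans h h', ?_⟩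
  rintro ⟨f, g, h⟩
  exact S.not_isAscendingPath (f := fun n => (f n).1) (fun n => (h n).2.1) g
    ⟨fun _ => S.invariant _, fun n => S.pos_mono (h n).2.1, fun n => (h n).1, fun n => (h n).2.2⟩

variable {S} {w : S.World} {d : ℕ} {A B : Formula}

theorem worldPos_mono {w' : S.World} (h : S.model.le w w') : S.worldPos w ≤ S.worldPos w' :=
  S.pos_mono h

theorem lt_next_of_rel {e : ℕ} (h : S.model.Rel w d e) : e < (S.worldPos w).next :=
  (S.model.Rel_dom w d e h).2

theorem mem_right_iff_notMem_left (hd : d < (S.worldPos w).next) (hA : A ∈ subformulas F) :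
    (d, A) ∈ (S.worldPos w).right ↔ (d, A) ∉ (S.worldPos w).left :=
  ⟨fun hr hl => S.not_provable w.1 (provable_of_mem_left_of_mem_right hl hr),
    (w.2.mem_left_or_mem_right hd hA).resolve_left⟩

theorem bot_notMem_left : (d, .bot) ∉ (S.worldPos w).left :=
  fun h => S.not_provable w.1 (provable_of_bot_left h)

theorem and_mem_left_iff (hd : d < (S.worldPos w).next) (h : A.and B ∈ subformulas F) :
    (d, A.and B) ∈ (S.worldPos w).left ↔
      (d, A) ∈ (S.worldPos w).left ∧ (d, B) ∈ (S.worldPos w).left := by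
  obtain ⟨hA, hB⟩ := mem_subformulas_of_and h
  refine ⟨fun hAB => ⟨?_, ?_⟩, fun ⟨hAl, hBl⟩ => ?_⟩ <;> by_contra hn
  · rw [← mem_right_iff_notMem_left hd hA] at hn
    exact S.not_provable w.1 (provable_of_and_left_of_fst_right hAB hn)
  · rw [← mem_right_iff_notMem_left hd hB] at hn
    exact S.not_provable w.1 (provable_of_and_left_of_snd_right hAB hn)
  · rw [← mem_right_iff_notMem_left hd h] at hn
    exact S.not_provable w.1 (provable_of_and_right hn hAl hBl)

theorem or_mem_left_iff (hd : d < (S.worldPos w).next) (h : A.or B ∈ subformulas F) :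
    (d, A.or B) ∈ (S.worldPos w).left ↔
      (d, A) ∈ (S.worldPos w).left ∨ (d, B) ∈ (S.worldPos w).left := by
  obtain ⟨hA, hB⟩ := mem_subformulas_of_or h
  refine ⟨fun hAB => ?_, fun hAB => ?_⟩ <;> by_contra hn
  · rw [not_or, ← mem_right_iff_notMem_left hd hA, ← mem_right_iff_notMem_left hd hB] at hn
    exact S.not_provable w.1 (provable_of_or_left hAB hn.1 hn.2)
  · rw [← mem_right_iff_notMem_left hd h] at hn
    obtain hAl | hBl := hAB
    · exact S.not_provable w.1 (provable_of_or_right_of_fst_left hn hAl)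
    · exact S.not_provable w.1 (provable_of_or_right_of_snd_left hn hBl)

theorem exists_world_of_imp_right (h : (d, A.imp B) ∈ (S.worldPos w).right) :
    ∃ w', S.model.le w w' ∧ (d, A) ∈ (S.worldPos w').left ∧ (d, B) ∈ (S.worldPos w').right := by
  have unfold : S.pos (.imp d A B :: w.1) = (S.worldPos w).unfoldImp d A B :=
    (S.answer _ _).eq_unfoldImp h
  obtain ⟨ms, hms, hsat, hright⟩ := S.exists_saturated (.imp d A B :: w.1)
  refine ⟨⟨ms, hsat⟩, (List.suffix_cons _ _).trans hms,
    Position.left_mono (S.pos_mono hms) ?_, hright ?_⟩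
  · rw [unfold]
    exact Multiset.mem_cons_self _ _
  · rw [unfold]
    exact Multiset.mem_singleton_self _

theorem exists_world_of_box_right (h : (d, A.box) ∈ (S.worldPos w).right) :
    ∃ w' e, S.model.le w w' ∧ S.model.Rel w' d e ∧ (e, A) ∈ (S.worldPos w').right := by
  have notMem_marks : A ∉ (S.worldPos w).marks d := fun hA => by
    obtain ⟨z, hzd, hz⟩ := (S.invariant w.1).exists_box_left hA
    exact S.not_provable w.1
      (provable_of_box_left_of_box_right (S.invariant w.1).fresh_next hz hzd h)
  have unfold : S.pos (.box d A :: w.1) = (S.worldPos w).unfoldBox d A :=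
    (S.answer _ _).eq_unfoldBox ⟨h, notMem_marks⟩
  obtain ⟨ms, hms, hsat, hright⟩ := S.exists_saturated (.box d A :: w.1)
  refine ⟨⟨ms, hsat⟩, (S.worldPos w).next, (List.suffix_cons _ _).trans hms,
    .single (Position.rel_mono (S.pos_mono hms) ?_), hright ?_⟩
  · rw [unfold]
    exact Set.mem_insert _ _
  · rw [unfold]
    exact Multiset.mem_singleton_self _

theorem imp_mem_left_iff (hd : d < (S.worldPos w).next) (h : A.imp B ∈ subformulas F) :
    (d, A.imp B) ∈ (S.worldPos w).left ↔
      ∀ w', S.model.le w w' → (d, A) ∈ (S.worldPos w').left → (d, B) ∈ (S.worldPos w').left := by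
  have hB := (mem_subformulas_of_imp h).2
  have lt_next {w' : S.World} (hw : S.model.le w w') : d < (S.worldPos w').next :=
    S.model.Dom_mono w w' hw hd
  constructor
  · intro hAB w' hw hA
    by_contra hn
    rw [← mem_right_iff_notMem_left (lt_next hw) hB] at hn
    exact S.not_provable w'.1
      (provable_of_imp_left (Position.left_mono (worldPos_mono hw) hAB) hA hn)
  · contrapose!
    rw [← mem_right_iff_notMem_left hd h]
    intro hAB
    obtain ⟨w', hw, hA, hBr⟩ := exists_world_of_imp_right hAB
    exact ⟨w', hw, hA, (mem_right_iff_notMem_left (lt_next hw) hB).1 hBr⟩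

theorem box_mem_left_iff (hd : d < (S.worldPos w).next) (h : A.box ∈ subformulas F) :
    (d, A.box) ∈ (S.worldPos w).left ↔
      ∀ w' e, S.model.le w w' → S.model.Rel w' d e → (e, A) ∈ (S.worldPos w').left := by
  have hA := mem_subformulas_of_box h
  constructor
  · intro hbox w' e hw he
    by_contra hn
    rw [← mem_right_iff_notMem_left (lt_next_of_rel he) hA] at hn
    exact S.not_provable w'.1
      (provable_of_box_left (Position.left_mono (worldPos_mono hw) hbox) he hn)
  · contrapose!
    rw [← mem_right_iff_notMem_left hd h]
    intro hbox
    obtain ⟨w', e, hw, he, hAr⟩ := exists_world_of_box_right hbox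
    exact ⟨w', e, hw, he, (mem_right_iff_notMem_left (lt_next_of_rel he) hA).1 hAr⟩

theorem dia_mem_left_iff (hd : d < (S.worldPos w).next) (h : A.dia ∈ subformulas F) :
    (d, A.dia) ∈ (S.worldPos w).left ↔
      ∃ e, S.model.Rel w d e ∧ (e, A) ∈ (S.worldPos w).left := by
  constructor
  · intro hdia
    obtain ⟨e, he, hA⟩ := w.2.exists_witness hdia
    exact ⟨e, .single he, hA⟩
  · rintro ⟨e, he, hA⟩
    by_contra hn
    rw [← mem_right_iff_notMem_left hd h] at hn
    exact S.not_provable w.1 (provable_of_dia_right hn he hA)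

theorem ksat_model_iff (hd : d < (S.worldPos w).next) (hA : A ∈ subformulas F) :
    ksat S.model w d A ↔ (d, A) ∈ (S.worldPos w).left := by
  induction A generalizing w d with
  | atom => exact .rfl
  | bot => exact iff_of_false id bot_notMem_left
  | and A B ihA ihB =>
    obtain ⟨hA', hB'⟩ := mem_subformulas_of_and hA
    rw [and_mem_left_iff hd hA]
    exact and_congr (ihA hd hA') (ihB hd hB')
  | or A B ihA ihB =>
    obtain ⟨hA', hB'⟩ := mem_subformulas_of_or hA
    rw [or_mem_left_iff hd hA]
    exact or_congr (ihA hd hA') (ihB hd hB')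
  | imp A B ihA ihB =>
    obtain ⟨hA', hB'⟩ := mem_subformulas_of_imp hA
    rw [imp_mem_left_iff hd hA]
    refine forall₂_congr fun w' hw => ?_
    have hd' : d < (S.worldPos w').next := S.model.Dom_mono w w' hw hd
    exact imp_congr (ihA hd' hA') (ihB hd' hB')
  | box A ih =>
    rw [box_mem_left_iff hd hA]
    exact forall₄_congr fun _ _ _ he => ih (lt_next_of_rel he) (mem_subformulas_of_box hA)
  | dia A ih =>
    rw [dia_mem_left_iff hd hA]
    exact exists_congr fun _ => and_congr_right fun he =>
      ih (lt_next_of_rel he) (mem_subformulas_of_dia hA)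

end RefuterStrategy

/-- **Completeness of the multi-succedent calculus.** If the standard
translation of `A` holds in every Kripke structure of pred-IGL then `∅ ⇒ x:A`
has an ∞-proof in mℓIK4. -/
theorem mlIGL_complete (A : Formula) (x : ℕ)
    (h : ∀ (W D : Type) (K : Kripke W D), Nonempty W → PredIGL K →
      ∀ (w : W) (ρ : ℕ → D), (∀ v, ρ v ∈ K.Dom w) → ∀ y : ℕ, ksat K w (ρ y) A) :
    InfProof RuleMLIK4 ⟨∅, 0, {(x, A)}⟩ := by
  by_contra hn
  obtain ⟨S, hS⟩ := exists_refuterStrategy hn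
  obtain ⟨ms, -, hsat, hright⟩ := S.exists_saturated []
  let w : S.World := ⟨ms, hsat⟩
  have hA : (x, A) ∈ (S.worldPos w).right :=
    hright (by rw [hS]; exact Multiset.mem_singleton_self _)
  have hx : x < (S.worldPos w).next := ((S.invariant ms).right hA).1
  have hsub := self_mem_subformulas A
  refine (RefuterStrategy.mem_right_iff_notMem_left hx hsub).1 hA ?_
  rw [← RefuterStrategy.ksat_model_iff hx hsub]
  exact h S.World ℕ S.model ⟨w⟩ S.predIGL_model w (fun _ => x) (fun _ => hx) 0

end IGL
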